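/- ∫₀¹ (2+3k-k²)/√(1+k) · K(k)³ dk = Γ(1/8)⁴ Γ(3/8)⁴ / (384√2 π²). -/

import Mathlib

open scoped Real
open MeasureTheory

noncomputable def EllK (k : ℝ) : ℝ :=
  ∫ x in (0:ℝ)..(1:ℝ), 1 / Real.sqrt ((1 - x^2) * (1 - k^2 * x^2))

noncomputable def EllE (k : ℝ) : ℝ :=
  ∫ x in (0:ℝ)..(1:ℝ), Real.sqrt ((1 - k^2 * x^2) / (1 - x^2))

noncomputable def EllK' (k : ℝ) : ℝ := EllK (Real.sqrt (1 - k^2))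

section Auxiliary

open Filter Topology

/-- The `j`-th moment `∑ c n * n ^ (2 j) * exp (-π n² s)` of a twisted theta series. -/
noncomputable def thetaMoment (c : ℤ → ℝ) (j : ℕ) (s : ℝ) : ℝ :=
  ∑' n : ℤ, c n * (n : ℝ) ^ (2 * j) * Real.exp (-π * (n : ℝ) ^ 2 * s)

lemma summable_pow_mul_exp_neg_sq (j : ℕ) {s : ℝ} (hs : 0 < s) :
    Summable fun n : ℤ => (n : ℝ) ^ (2 * j) * Real.exp (-π * (n : ℝ) ^ 2 * s) := by
  refine (summable_pow_mul_jacobiTheta₂_term_bound 0 hs (2 * j)).congr fun n => ?_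
  simp only [mul_zero, zero_mul, sub_zero, Int.cast_abs, (even_two_mul j).pow_abs]
  ring_nf

lemma abs_thetaTerm_le {c : ℤ → ℝ} (hc : ∀ n, |c n| ≤ 1) (j : ℕ) (s : ℝ) (n : ℤ) :
    |c n * (n : ℝ) ^ (2 * j) * Real.exp (-π * (n : ℝ) ^ 2 * s)| ≤
      (n : ℝ) ^ (2 * j) * Real.exp (-π * (n : ℝ) ^ 2 * s) := by
  have h : 0 ≤ (n : ℝ) ^ (2 * j) := (even_two_mul j).pow_nonneg _
  rw [abs_mul, abs_mul, Real.abs_exp, abs_of_nonneg h]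
  have := mul_le_mul_of_nonneg_right (hc n) h
  have := mul_le_mul_of_nonneg_right this (Real.exp_pos (-π * (n : ℝ) ^ 2 * s)).le
  linarith

lemma summable_thetaTerm {c : ℤ → ℝ} (hc : ∀ n, |c n| ≤ 1) (j : ℕ) {s : ℝ} (hs : 0 < s) :
    Summable fun n : ℤ => c n * (n : ℝ) ^ (2 * j) * Real.exp (-π * (n : ℝ) ^ 2 * s) :=
  (summable_pow_mul_exp_neg_sq j hs).of_norm_bounded fun n => abs_thetaTerm_le hc j s n

lemma hasDerivAt_thetaMoment {c : ℤ → ℝ} (hc : ∀ n, |c n| ≤ 1) (j : ℕ) {s : ℝ} (hs : 0 < s) :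
    HasDerivAt (thetaMoment c j) (-π * thetaMoment c (j + 1) s) s := by
  have hs2 : 0 < s / 2 := half_pos hs
  have hterm (n : ℤ) (y : ℝ) :
      HasDerivAt (fun y => c n * (n : ℝ) ^ (2 * j) * Real.exp (-π * (n : ℝ) ^ 2 * y))
        (-π * (c n * (n : ℝ) ^ (2 * (j + 1)) * Real.exp (-π * (n : ℝ) ^ 2 * y))) y := by
    refine (((hasDerivAt_id y).const_mul (-π * (n : ℝ) ^ 2)).exp.const_mul
      (c n * (n : ℝ) ^ (2 * j))).congr_deriv ?_
    simp only [id_eq]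
    ring
  have := hasDerivAt_tsum_of_isPreconnected
    (g := fun (n : ℤ) y => c n * (n : ℝ) ^ (2 * j) * Real.exp (-π * (n : ℝ) ^ 2 * y))
    ((summable_pow_mul_exp_neg_sq (j + 1) hs2).mul_left π) isOpen_Ioi isPreconnected_Ioi
    (fun n y _ => hterm n y) (fun n y hy => ?_) (Set.mem_Ioi.2 (half_lt_self hs))
    (summable_thetaTerm hc j hs) (Set.mem_Ioi.2 (half_lt_self hs))
  · rw [tsum_mul_left] at this
    exact this
  · rw [norm_mul, Real.norm_eq_abs, Real.norm_eq_abs, abs_neg, abs_of_pos Real.pi_pos]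
    refine mul_le_mul_of_nonneg_left ((abs_thetaTerm_le hc (j + 1) y n).trans ?_) Real.pi_pos.le
    refine mul_le_mul_of_nonneg_left (Real.exp_le_exp.2 ?_) ((even_two_mul _).pow_nonneg _)
    have : 0 ≤ π * (n : ℝ) ^ 2 := by positivity
    nlinarith [Set.mem_Ioi.1 hy]

/-- After removal of the term `n = 0`, theta moments decay like `exp (-π s)`. -/
lemma tendsto_exp_mul_thetaMoment {c : ℤ → ℝ} (hc : ∀ n, |c n| ≤ 1) (j : ℕ) :
    Tendsto (fun s => Real.exp (π * s) * (thetaMoment c j s - c 0 * 0 ^ (2 * j))) atTop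
      (𝓝 (c 1 + c (-1))) := by
  have hlim : ∑' n : ℤ, (if n = 1 ∨ n = -1 then c n else 0) = c 1 + c (-1) := by
    rw [tsum_eq_sum (s := {1, -1}) (fun n hn => by
      simp only [Finset.mem_insert, Finset.mem_singleton] at hn; rw [if_neg hn])]
    rw [Finset.sum_pair (by norm_num)]
    simp
  rw [← hlim]
  have hdom := tendsto_tsum_of_dominated_convergence (𝓕 := atTop)
    (f := fun (s : ℝ) (n : ℤ) => if n = 0 then 0 else
      Real.exp (π * s) * (c n * (n : ℝ) ^ (2 * j) * Real.exp (-π * (n : ℝ) ^ 2 * s)))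
    (g := fun n : ℤ => if n = 1 ∨ n = -1 then c n else 0)
    ((summable_pow_mul_exp_neg_sq j one_pos).mul_left (Real.exp π)) (fun n => ?_) ?_
  · refine hdom.congr' ?_
    filter_upwards [eventually_gt_atTop 0] with s hs
    rw [thetaMoment, (summable_thetaTerm hc j hs).tsum_eq_add_tsum_ite 0]
    simp only [Int.cast_zero, ne_eq, OfNat.ofNat_ne_zero, not_false_eq_true, zero_pow, mul_zero,
      zero_mul, Real.exp_zero, mul_one, add_sub_cancel_left]
    rw [← tsum_mul_left]
    exact tsum_congr fun n => by split_ifs <;> simp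
  · by_cases h0 : n = 0
    · subst h0; simp
    by_cases h1 : n = 1 ∨ n = -1
    · simp only [h0, h1, if_true, if_false]
      refine tendsto_const_nhds.congr fun s => ?_
      have h2 : (n : ℝ) ^ 2 = 1 := by rcases h1 with rfl | rfl <;> norm_num
      rw [pow_mul, h2, one_pow, mul_one, mul_one, mul_comm, mul_assoc, ← Real.exp_add]
      simp
    · simp only [h0, h1, if_false]
      have h4 : (2 : ℝ) ≤ (n : ℝ) ^ 2 := by
        have : (2 : ℤ) ≤ n ^ 2 := by
          rcases (by omega : 2 ≤ n ∨ n ≤ -2) with h | h <;> nlinarith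
        exact_mod_cast this
      have : Tendsto (fun s : ℝ => c n * (n : ℝ) ^ (2 * j) *
          Real.exp (-((π * ((n : ℝ) ^ 2 - 1)) * s))) atTop (𝓝 (c n * (n : ℝ) ^ (2 * j) * 0)) := by
        refine (Real.tendsto_exp_neg_atTop_nhds_zero.comp
          (tendsto_id.const_mul_atTop ?_)).const_mul _
        exact mul_pos Real.pi_pos (by linarith)
      rw [mul_zero] at this
      refine this.congr fun s => ?_
      rw [mul_comm (Real.exp (π * s)), mul_assoc (c n * _), ← Real.exp_add]
      ring_nf
  · filter_upwards [eventually_ge_atTop 1] with s hs n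
    have hp := (even_two_mul j).pow_nonneg (n : ℝ)
    by_cases h0 : n = 0
    · subst h0
      simp only [if_true, norm_zero]
      positivity
    simp only [h0, if_false]
    rw [norm_mul, Real.norm_eq_abs, Real.abs_exp]
    refine (mul_le_mul_of_nonneg_left (abs_thetaTerm_le hc j s n) (Real.exp_pos _).le).trans ?_
    rw [mul_left_comm, mul_left_comm (Real.exp π), ← Real.exp_add, ← Real.exp_add]
    refine mul_le_mul_of_nonneg_left (Real.exp_le_exp.2 ?_) hp
    have h4 : (1 : ℝ) ≤ (n : ℝ) ^ 2 := by
      have : (1 : ℤ) ≤ n ^ 2 := by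
        rcases (by omega : 1 ≤ n ∨ n ≤ -1) with h | h <;> nlinarith
      exact_mod_cast this
    have := mul_nonneg Real.pi_pos.le (mul_nonneg (sub_nonneg.2 h4) (sub_nonneg.2 hs))
    nlinarith

/-- The moments of Jacobi's `θ₃` on the imaginary axis. -/
noncomputable def thetaThree : ℕ → ℝ → ℝ := thetaMoment fun _ => 1

/-- The moments of Jacobi's `θ₄` on the imaginary axis. -/
noncomputable def thetaFour : ℕ → ℝ → ℝ := thetaMoment fun n => (-1) ^ n

lemma abs_one_le_one (_ : ℤ) : |(1 : ℝ)| ≤ 1 := by simp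

lemma abs_neg_one_zpow_le (n : ℤ) : |(-1 : ℝ) ^ n| ≤ 1 := by
  rw [abs_zpow, abs_neg, abs_one, one_zpow]

lemma hasDerivAt_thetaThree (j : ℕ) {s : ℝ} (hs : 0 < s) :
    HasDerivAt (thetaThree j) (-π * thetaThree (j + 1) s) s :=
  hasDerivAt_thetaMoment abs_one_le_one j hs

lemma hasDerivAt_thetaFour (j : ℕ) {s : ℝ} (hs : 0 < s) :
    HasDerivAt (thetaFour j) (-π * thetaFour (j + 1) s) s :=
  hasDerivAt_thetaMoment abs_neg_one_zpow_le j hs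

lemma thetaThree_zero_eq (s : ℝ) :
    thetaThree 0 s = ∑' n : ℤ, Real.exp (-π * (n : ℝ) ^ 2 * s) := by
  simp [thetaThree, thetaMoment]

lemma thetaFour_zero_eq (s : ℝ) :
    thetaFour 0 s = ∑' n : ℤ, (-1) ^ n * Real.exp (-π * (n : ℝ) ^ 2 * s) := by
  simp [thetaFour, thetaMoment]

lemma summable_exp_neg_sq {s : ℝ} (hs : 0 < s) :
    Summable fun n : ℤ => Real.exp (-π * (n : ℝ) ^ 2 * s) := by
  simpa using summable_pow_mul_exp_neg_sq 0 hs

lemma summable_neg_one_zpow_mul_exp_neg_sq {s : ℝ} (hs : 0 < s) :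
    Summable fun n : ℤ => (-1 : ℝ) ^ n * Real.exp (-π * (n : ℝ) ^ 2 * s) := by
  simpa using summable_thetaTerm abs_neg_one_zpow_le 0 hs

/-- A sum over `ℤ × ℤ` supported on pairs of equal parity. -/
lemma tsum_add_sub_eq {F : ℤ × ℤ → ℝ} (hF : ∀ p : ℤ × ℤ, Odd (p.1 + p.2) → F p = 0) :
    ∑' p : ℤ × ℤ, F (p.1 + p.2, p.1 - p.2) = ∑' p, F p := by
  refine Function.Injective.tsum_eq (g := fun p : ℤ × ℤ => (p.1 + p.2, p.1 - p.2)) ?_ ?_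
  · rintro ⟨a, b⟩ ⟨c, d⟩ h
    simp only [Prod.mk.injEq] at h ⊢
    omega
  · rintro ⟨m, n⟩ h
    rcases Int.even_or_odd (m + n) with ⟨k, hk⟩ | ho
    · exact ⟨(k, m - k), by simp only [Prod.mk.injEq]; omega⟩
    · exact absurd (hF _ ho) h

lemma thetaThree_sq_add_thetaFour_sq {s : ℝ} (hs : 0 < s) :
    thetaThree 0 s ^ 2 + thetaFour 0 s ^ 2 = 2 * thetaThree 0 (2 * s) ^ 2 := by
  have h3 := (summable_exp_neg_sq hs).norm
  have h4 := (summable_neg_one_zpow_mul_exp_neg_sq hs).norm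
  have h32 := (summable_exp_neg_sq (mul_pos two_pos hs)).norm
  rw [thetaThree_zero_eq, thetaThree_zero_eq, thetaFour_zero_eq, sq, sq, sq,
    tsum_mul_tsum_of_summable_norm h3 h3, tsum_mul_tsum_of_summable_norm h4 h4,
    tsum_mul_tsum_of_summable_norm h32 h32,
    ← (summable_mul_of_summable_norm h3 h3).tsum_add (summable_mul_of_summable_norm h4 h4),
    ← tsum_mul_left, ← tsum_add_sub_eq]
  · refine tsum_congr fun ⟨p, q⟩ => ?_
    have hpar : ((-1 : ℝ) ^ (p + q)) * (-1) ^ (p - q) = 1 := by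
      rw [← zpow_add₀ (by norm_num), show p + q + (p - q) = 2 * p by ring]
      exact (even_two_mul p).neg_one_zpow
    rw [mul_mul_mul_comm, hpar, ← Real.exp_add, ← Real.exp_add]
    push_cast
    rw [one_mul, ← two_mul]
    congr 2
    ring
  · rintro ⟨m, n⟩ h
    rw [mul_mul_mul_comm, ← zpow_add₀ (by norm_num), h.neg_one_zpow]
    ring

lemma thetaThree_mul_thetaFour {s : ℝ} (hs : 0 < s) :
    thetaThree 0 s * thetaFour 0 s = thetaFour 0 (2 * s) ^ 2 := by
  have h3 := (summable_exp_neg_sq hs).norm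
  have h4 := (summable_neg_one_zpow_mul_exp_neg_sq hs).norm
  have h42 := (summable_neg_one_zpow_mul_exp_neg_sq (mul_pos two_pos hs)).norm
  have key : thetaThree 0 s * thetaFour 0 s + thetaFour 0 s * thetaThree 0 s =
      2 * thetaFour 0 (2 * s) ^ 2 := by
    rw [thetaThree_zero_eq, thetaFour_zero_eq, thetaFour_zero_eq, sq,
      tsum_mul_tsum_of_summable_norm h3 h4, tsum_mul_tsum_of_summable_norm h4 h3,
      tsum_mul_tsum_of_summable_norm h42 h42,
      ← (summable_mul_of_summable_norm h3 h4).tsum_add (summable_mul_of_summable_norm h4 h3),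
      ← tsum_mul_left, ← tsum_add_sub_eq]
    · refine tsum_congr fun ⟨p, q⟩ => ?_
      have hpar : ((-1 : ℝ) ^ (p - q)) = (-1) ^ (p + q) := by
        rw [show p - q = p + q + -(2 * q) by ring, zpow_add₀ (by norm_num),
          (even_two_mul q).neg.neg_one_zpow, mul_one]
      simp only
      have hexp : Real.exp (-π * ((p + q : ℤ) : ℝ) ^ 2 * s) *
          Real.exp (-π * ((p - q : ℤ) : ℝ) ^ 2 * s) =
          Real.exp (-π * (p : ℝ) ^ 2 * (2 * s)) * Real.exp (-π * (q : ℝ) ^ 2 * (2 * s)) := by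
        rw [← Real.exp_add, ← Real.exp_add]
        push_cast
        congr 1
        ring
      rw [hpar, zpow_add₀ (by norm_num)]
      linear_combination 2 * (-1) ^ p * (-1) ^ q * hexp
    · rintro ⟨m, n⟩ h
      have hpar : ((-1 : ℝ) ^ n) = -(-1) ^ m := by
        have h1 : ((-1 : ℝ) ^ m) * (-1) ^ n = -1 := by
          rw [← zpow_add₀ (by norm_num), h.neg_one_zpow]
        rcases Int.even_or_odd m with h2 | h2 <;> rw [h2.neg_one_zpow] at h1 ⊢ <;> linarith
      simp only
      rw [hpar]
      ring
  linarith

lemma thetaThree_zero_inv {s : ℝ} (hs : 0 < s) :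
    thetaThree 0 s⁻¹ = √s * thetaThree 0 s := by
  have h := Real.tsum_exp_neg_mul_int_sq (inv_pos.2 hs)
  rw [thetaThree_zero_eq, thetaThree_zero_eq]
  have e1 : (fun n : ℤ => Real.exp (-π * (n : ℝ) ^ 2 * s⁻¹)) =
      fun n : ℤ => Real.exp (-π * s⁻¹ * (n : ℝ) ^ 2) := by ext n; ring_nf
  have e2 : (fun n : ℤ => Real.exp (-π * (n : ℝ) ^ 2 * s)) =
      fun n : ℤ => Real.exp (-π / s⁻¹ * (n : ℝ) ^ 2) := by ext n; rw [div_inv_eq_mul]; ring_nf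
  rw [e1, e2, h, ← Real.sqrt_eq_rpow, Real.sqrt_inv, one_div, inv_inv]

lemma one_le_thetaThree {s : ℝ} (hs : 0 < s) : 1 ≤ thetaThree 0 s := by
  rw [thetaThree_zero_eq]
  simpa using (summable_exp_neg_sq hs).le_tsum 0 fun n _ => (Real.exp_pos _).le

lemma thetaThree_pos {s : ℝ} (hs : 0 < s) : 0 < thetaThree 0 s :=
  one_pos.trans_le (one_le_thetaThree hs)

lemma thetaFour_lt_thetaThree {s : ℝ} (hs : 0 < s) : thetaFour 0 s < thetaThree 0 s := by
  rw [thetaThree_zero_eq, thetaFour_zero_eq]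
  refine Summable.tsum_lt_tsum (i := 1) (fun n => ?_) ?_
    (summable_neg_one_zpow_mul_exp_neg_sq hs) (summable_exp_neg_sq hs)
  · have := (abs_le.1 (abs_neg_one_zpow_le n)).2
    nlinarith [Real.exp_pos (-π * (n : ℝ) ^ 2 * s)]
  · have := Real.exp_pos (-π * ((1 : ℤ) : ℝ) ^ 2 * s)
    rw [zpow_one]
    linarith

lemma tendsto_exp_mul_thetaThree_sub_one :
    Tendsto (fun s => Real.exp (π * s) * (thetaThree 0 s - 1)) atTop (𝓝 2) := by
  have := tendsto_exp_mul_thetaMoment abs_one_le_one 0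
  norm_num at this
  exact this

lemma tendsto_exp_mul_thetaFour_sub_one :
    Tendsto (fun s => Real.exp (π * s) * (thetaFour 0 s - 1)) atTop (𝓝 (-2)) := by
  have := tendsto_exp_mul_thetaMoment abs_neg_one_zpow_le 0
  norm_num at this
  exact this

lemma tendsto_exp_mul_thetaThree_succ (j : ℕ) :
    Tendsto (fun s => Real.exp (π * s) * thetaThree (j + 1) s) atTop (𝓝 2) := by
  have := tendsto_exp_mul_thetaMoment abs_one_le_one (j + 1)
  norm_num at this
  exact this

lemma tendsto_exp_mul_thetaFour_succ (j : ℕ) :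
    Tendsto (fun s => Real.exp (π * s) * thetaFour (j + 1) s) atTop (𝓝 (-2)) := by
  have := tendsto_exp_mul_thetaMoment abs_neg_one_zpow_le (j + 1)
  norm_num at this
  exact this

lemma tendsto_of_tendsto_exp_mul {f : ℝ → ℝ} {l : ℝ}
    (h : Tendsto (fun s => Real.exp (π * s) * f s) atTop (𝓝 l)) : Tendsto f atTop (𝓝 0) := by
  have h1 : Tendsto (fun s : ℝ => Real.exp (-(π * s))) atTop (𝓝 0) :=
    Real.tendsto_exp_neg_atTop_nhds_zero.comp (tendsto_id.const_mul_atTop Real.pi_pos)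
  have h2 := h1.mul h
  rw [zero_mul] at h2
  refine h2.congr fun s => ?_
  rw [← mul_assoc, ← Real.exp_add, neg_add_cancel, Real.exp_zero, one_mul]

lemma tendsto_thetaThree : Tendsto (thetaThree 0) atTop (𝓝 1) := by
  have := (tendsto_of_tendsto_exp_mul tendsto_exp_mul_thetaThree_sub_one).add_const 1
  simpa using this

lemma tendsto_thetaFour : Tendsto (thetaFour 0) atTop (𝓝 1) := by
  have := (tendsto_of_tendsto_exp_mul tendsto_exp_mul_thetaFour_sub_one).add_const 1
  simpa using this

lemma tendsto_two_pow_mul {s : ℝ} (hs : 0 < s) :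
    Tendsto (fun n : ℕ => 2 ^ n * s) atTop atTop :=
  (tendsto_pow_atTop_atTop_of_one_lt one_lt_two).atTop_mul_const hs

lemma thetaFour_pos {s : ℝ} (hs : 0 < s) : 0 < thetaFour 0 s := by
  have hnn (t : ℝ) (ht : 0 < t) : 0 ≤ thetaFour 0 t := by
    have h := thetaThree_mul_thetaFour ht
    exact nonneg_of_mul_nonneg_right (h ▸ sq_nonneg _) (thetaThree_pos ht)
  refine (hnn s hs).lt_of_ne' fun h0 => ?_
  have hall (n : ℕ) : thetaFour 0 (2 ^ n * s) = 0 := by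
    induction n with
    | zero => simpa using h0
    | succ n ih =>
      have h := thetaThree_mul_thetaFour (s := 2 ^ n * s) (by positivity)
      rw [ih, mul_zero] at h
      rw [pow_succ', mul_assoc]
      exact pow_eq_zero_iff two_ne_zero |>.1 h.symm
  have := (tendsto_thetaFour.comp (tendsto_two_pow_mul hs)).congr hall
  exact zero_ne_one (tendsto_nhds_unique tendsto_const_nhds this)

lemma eq_of_hasDerivAt_of_eqOn_pos {f g : ℝ → ℝ} {f' g' s : ℝ} (hs : 0 < s)
    (h : ∀ t, 0 < t → f t = g t) (hf : HasDerivAt f f' s) (hg : HasDerivAt g g' s) : f' = g' := by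
  refine hf.unique (hg.congr_of_eventuallyEq ?_)
  filter_upwards [lt_mem_nhds hs] with t ht using h t ht

lemma hasDerivAt_thetaThree_two_mul (j : ℕ) {s : ℝ} (hs : 0 < s) :
    HasDerivAt (fun t => thetaThree j (2 * t)) (-(2 * π) * thetaThree (j + 1) (2 * s)) s := by
  have := (hasDerivAt_thetaThree j (mul_pos two_pos hs)).comp s ((hasDerivAt_id s).const_mul 2)
  exact this.congr_deriv (by ring)

lemma hasDerivAt_thetaFour_two_mul (j : ℕ) {s : ℝ} (hs : 0 < s) :
    HasDerivAt (fun t => thetaFour j (2 * t)) (-(2 * π) * thetaFour (j + 1) (2 * s)) s := by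
  have := (hasDerivAt_thetaFour j (mul_pos two_pos hs)).comp s ((hasDerivAt_id s).const_mul 2)
  exact this.congr_deriv (by ring)

lemma thetaThree_mul_deriv_add {s : ℝ} (hs : 0 < s) :
    thetaThree 0 s * thetaThree 1 s + thetaFour 0 s * thetaFour 1 s =
      4 * (thetaThree 0 (2 * s) * thetaThree 1 (2 * s)) := by
  have h := eq_of_hasDerivAt_of_eqOn_pos hs (fun t ht => thetaThree_sq_add_thetaFour_sq ht)
    (((hasDerivAt_thetaThree 0 hs).fun_pow 2).fun_add ((hasDerivAt_thetaFour 0 hs).fun_pow 2))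
    (((hasDerivAt_thetaThree_two_mul 0 hs).fun_pow 2).const_mul 2)
  norm_num at h
  refine mul_left_cancel₀ (mul_ne_zero two_ne_zero Real.pi_ne_zero) ?_
  linear_combination -h

lemma thetaThree_mul_thetaFour_deriv {s : ℝ} (hs : 0 < s) :
    thetaThree 1 s * thetaFour 0 s + thetaThree 0 s * thetaFour 1 s =
      4 * (thetaFour 0 (2 * s) * thetaFour 1 (2 * s)) := by
  have h := eq_of_hasDerivAt_of_eqOn_pos hs (fun t ht => thetaThree_mul_thetaFour ht)
    ((hasDerivAt_thetaThree 0 hs).fun_mul (hasDerivAt_thetaFour 0 hs))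
    ((hasDerivAt_thetaFour_two_mul 0 hs).fun_pow 2)
  norm_num at h
  refine mul_left_cancel₀ Real.pi_ne_zero ?_
  linear_combination -h

lemma thetaThree_second_deriv_add {s : ℝ} (hs : 0 < s) :
    thetaThree 1 s ^ 2 + thetaThree 0 s * thetaThree 2 s +
      (thetaFour 1 s ^ 2 + thetaFour 0 s * thetaFour 2 s) =
      8 * (thetaThree 1 (2 * s) ^ 2 + thetaThree 0 (2 * s) * thetaThree 2 (2 * s)) := by
  have h := eq_of_hasDerivAt_of_eqOn_pos hs (fun t ht => thetaThree_mul_deriv_add ht)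
    (((hasDerivAt_thetaThree 0 hs).fun_mul (hasDerivAt_thetaThree 1 hs)).fun_add
      ((hasDerivAt_thetaFour 0 hs).fun_mul (hasDerivAt_thetaFour 1 hs)))
    (((hasDerivAt_thetaThree_two_mul 0 hs).fun_mul
      (hasDerivAt_thetaThree_two_mul 1 hs)).const_mul 4)
  norm_num at h
  refine mul_left_cancel₀ Real.pi_ne_zero ?_
  linear_combination -h

lemma eq_of_doubling_invariant {f : ℝ → ℝ} {l : ℝ} (hf : ∀ s, 0 < s → f (2 * s) = f s)
    (hl : Tendsto f atTop (𝓝 l)) {s : ℝ} (hs : 0 < s) : f s = l := by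
  have hall (n : ℕ) : f s = f (2 ^ n * s) := by
    induction n with
    | zero => simp
    | succ n ih => rw [ih, pow_succ', mul_assoc, hf _ (by positivity)]
  exact tendsto_nhds_unique
    (tendsto_const_nhds.congr hall) (hl.comp (tendsto_two_pow_mul hs))

lemma thetaFour_sq_lt_thetaThree_sq {s : ℝ} (hs : 0 < s) :
    thetaFour 0 s ^ 2 < thetaThree 0 s ^ 2 :=
  pow_lt_pow_left₀ (thetaFour_lt_thetaThree hs) (thetaFour_pos hs).le two_ne_zero

lemma tendsto_exp_mul_thetaThree_pow_sub_thetaFour_pow :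
    Tendsto (fun s => Real.exp (π * s) * (thetaThree 0 s ^ 4 - thetaFour 0 s ^ 4)) atTop
      (𝓝 16) := by
  have h := ((tendsto_exp_mul_thetaThree_sub_one.sub tendsto_exp_mul_thetaFour_sub_one).mul
    (tendsto_thetaThree.add tendsto_thetaFour)).mul
    ((tendsto_thetaThree.pow 2).add (tendsto_thetaFour.pow 2))
  norm_num at h
  exact h.congr fun s => by ring

/-- The logarithmic derivative of `θ₃ / θ₄`. -/
lemma thetaThree_deriv_thetaFour_sub {s : ℝ} (hs : 0 < s) :
    4 * (thetaThree 1 s * thetaFour 0 s - thetaThree 0 s * thetaFour 1 s) =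
      thetaThree 0 s * thetaFour 0 s * (thetaThree 0 s ^ 4 - thetaFour 0 s ^ 4) := by
  have hne (t : ℝ) (ht : 0 < t) :
      thetaThree 0 t * thetaFour 0 t * (thetaThree 0 t ^ 4 - thetaFour 0 t ^ 4) ≠ 0 := by
    have h1 := thetaThree_pos ht
    have h2 := thetaFour_pos ht
    have h3 := sub_pos.2 (pow_lt_pow_left₀ (thetaFour_lt_thetaThree ht) h2.le four_ne_zero)
    positivity
  have key := eq_of_doubling_invariant (l := 1)
    (f := fun s => 4 * (thetaThree 1 s * thetaFour 0 s - thetaThree 0 s * thetaFour 1 s) /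
      (thetaThree 0 s * thetaFour 0 s * (thetaThree 0 s ^ 4 - thetaFour 0 s ^ 4)))
    (fun t ht => ?_) ?_ hs
  · exact (div_eq_one_iff_eq (hne s hs)).1 key
  · have ht2 : 0 < 2 * t := by positivity
    have e1 := thetaThree_sq_add_thetaFour_sq ht
    have e2 := thetaThree_mul_thetaFour ht
    have e3 := thetaThree_mul_deriv_add ht
    have e4 := thetaThree_mul_thetaFour_deriv ht
    have h1 := hne t ht
    have h2 := hne _ ht2
    have hA := (thetaThree_pos ht2).ne'
    have hB := (thetaFour_pos ht2).ne'
    have hd := (sub_pos.2 (thetaFour_sq_lt_thetaThree_sq ht)).ne'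
    rw [div_eq_div_iff h2 h1]
    generalize thetaThree 0 t = a at *
    generalize thetaThree 1 t = a1 at *
    generalize thetaFour 0 t = b at *
    generalize thetaFour 1 t = b1 at *
    generalize thetaThree 0 (2 * t) = A at *
    generalize thetaThree 1 (2 * t) = A1 at *
    generalize thetaFour 0 (2 * t) = B at *
    generalize thetaFour 1 (2 * t) = B1 at *
    have hnum : A * B * (A1 * B - A * B1) = (a ^ 2 - b ^ 2) / 8 * (a1 * b - a * b1) := by
      linear_combination (-(a * b) / 4) * e3 + (a ^ 2 + b ^ 2) / 8 * e4 + (B * B1 / 2) * e1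
        + A * A1 * (-1) * e2
    have hden : A ^ 2 * B ^ 2 * (A ^ 4 - B ^ 4) =
        (a ^ 2 + b ^ 2) / 2 * (a * b) * ((a ^ 2 - b ^ 2) ^ 2 / 4) := by
      rw [show A ^ 4 = (A ^ 2) ^ 2 by ring, show B ^ 4 = (B ^ 2) ^ 2 by ring, ← e2,
        show A ^ 2 = (a ^ 2 + b ^ 2) / 2 by linarith]
      ring
    refine mul_left_cancel₀ (mul_ne_zero hA hB) ?_
    linear_combination 4 * (a * b * (a ^ 4 - b ^ 4)) * hnum - 4 * (a1 * b - a * b1) * hden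
  · have hn := ((tendsto_exp_mul_thetaThree_succ 0).mul tendsto_thetaFour).sub
      (tendsto_thetaThree.mul (tendsto_exp_mul_thetaFour_succ 0))
    have hd := (tendsto_thetaThree.mul tendsto_thetaFour).mul
      tendsto_exp_mul_thetaThree_pow_sub_thetaFour_pow
    have h := (hn.const_mul 4).div hd (by norm_num)
    norm_num at h
    refine h.congr fun s => ?_
    simp only [Pi.div_apply]
    refine Eq.trans ?_ (mul_div_mul_left _ _ (Real.exp_ne_zero (π * s)))
    congr 1 <;> ring

lemma thetaThree_second_deriv_thetaFour_sub {s : ℝ} (hs : 0 < s) :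
    4 * (thetaThree 2 s * thetaFour 0 s - thetaThree 0 s * thetaFour 2 s) =
      (thetaThree 1 s * thetaFour 0 s + thetaThree 0 s * thetaFour 1 s) *
        (thetaThree 0 s ^ 4 - thetaFour 0 s ^ 4) +
      4 * (thetaThree 0 s * thetaFour 0 s) *
        (thetaThree 0 s ^ 3 * thetaThree 1 s - thetaFour 0 s ^ 3 * thetaFour 1 s) := by
  have h := eq_of_hasDerivAt_of_eqOn_pos hs (fun t ht => thetaThree_deriv_thetaFour_sub ht)
    ((((hasDerivAt_thetaThree 1 hs).fun_mul (hasDerivAt_thetaFour 0 hs)).fun_sub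
      ((hasDerivAt_thetaThree 0 hs).fun_mul (hasDerivAt_thetaFour 1 hs))).const_mul 4)
    (((hasDerivAt_thetaThree 0 hs).fun_mul (hasDerivAt_thetaFour 0 hs)).fun_mul
      (((hasDerivAt_thetaThree 0 hs).fun_pow 4).fun_sub ((hasDerivAt_thetaFour 0 hs).fun_pow 4)))
  norm_num at h
  refine mul_left_cancel₀ Real.pi_ne_zero ?_
  linear_combination -h

lemma tendsto_sq_mul_of_tendsto_exp_mul {f : ℝ → ℝ} {l : ℝ}
    (h : Tendsto (fun s => Real.exp (π * s) * f s) atTop (𝓝 l)) :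
    Tendsto (fun s => s ^ 2 * f s) atTop (𝓝 0) := by
  have h1 : Tendsto (fun s : ℝ => s ^ 2 * Real.exp (-(π * s))) atTop (𝓝 0) := by
    have := ((Real.tendsto_pow_mul_exp_neg_atTop_nhds_zero 2).comp
      (tendsto_id.const_mul_atTop Real.pi_pos)).const_mul ((π ^ 2)⁻¹)
    rw [mul_zero] at this
    refine this.congr fun s => ?_
    have := Real.pi_pos.ne'
    simp only [Function.comp, id]
    field_simp
  have h2 := h1.mul h
  rw [zero_mul] at h2
  refine h2.congr fun s => ?_
  rw [mul_assoc, ← mul_assoc (Real.exp _), ← Real.exp_add]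
  simp

/-- The second order differential equation satisfied by `θ₃`. -/
lemma thetaThree_ode {s : ℝ} (hs : 0 < s) :
    thetaThree 2 s / thetaThree 0 s - 3 * (thetaThree 1 s / thetaThree 0 s) ^ 2 =
      thetaFour 0 s ^ 4 * (thetaThree 0 s ^ 4 - thetaFour 0 s ^ 4) / 8 := by
  have key := eq_of_doubling_invariant (l := 0)
    (f := fun s => s ^ 2 * (thetaThree 2 s / thetaThree 0 s -
      3 * (thetaThree 1 s / thetaThree 0 s) ^ 2 -
      thetaFour 0 s ^ 4 * (thetaThree 0 s ^ 4 - thetaFour 0 s ^ 4) / 8))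
    (fun t ht => ?_) (tendsto_sq_mul_of_tendsto_exp_mul (l := 0) ?_) hs
  · exact sub_eq_zero.1 ((mul_eq_zero.1 key).resolve_left (by positivity))
  · have ht2 : 0 < 2 * t := by positivity
    have e1 := thetaThree_sq_add_thetaFour_sq ht
    have e2 := thetaThree_mul_thetaFour ht
    have e3 := thetaThree_mul_deriv_add ht
    have e4 := thetaThree_second_deriv_add ht
    have e5 := thetaThree_deriv_thetaFour_sub ht
    have e6 := thetaThree_second_deriv_thetaFour_sub ht
    have hA := thetaThree_pos ht2
    have ha := thetaThree_pos ht
    have hb := thetaFour_pos ht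
    generalize thetaThree 0 t = a at *
    generalize thetaThree 1 t = a1 at *
    generalize thetaThree 2 t = a2 at *
    generalize thetaFour 0 t = b at *
    generalize thetaFour 1 t = b1 at *
    generalize thetaFour 2 t = b2 at *
    generalize thetaThree 0 (2 * t) = A at *
    generalize thetaThree 1 (2 * t) = A1 at *
    generalize thetaThree 2 (2 * t) = A2 at *
    generalize thetaFour 0 (2 * t) = B at *
    have hA2 : A ^ 2 = (a ^ 2 + b ^ 2) / 2 := by linarith
    have hb1 : b1 = b * (a1 / a - (a ^ 4 - b ^ 4) / 4) := by
      field_simp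
      linear_combination -e5
    have hb2 : b2 = b * (a2 / a - ((a1 * b + a * b1) * (a ^ 4 - b ^ 4) +
        4 * (a * b) * (a ^ 3 * a1 - b ^ 3 * b1)) / (4 * (a * b))) := by
      field_simp
      linear_combination -e6
    have hA1 : A1 / A = (a * a1 + b * b1) / (4 * A ^ 2) := by
      rw [e3]; field_simp
    have hA3 : A2 / A = (a1 ^ 2 + a * a2 + (b1 ^ 2 + b * b2)) / (8 * A ^ 2) - (A1 / A) ^ 2 := by
      rw [e4]; field_simp; ring
    rw [show A ^ 4 = (A ^ 2) ^ 2 by ring, show B ^ 4 = (B ^ 2) ^ 2 by ring, hA3, hA1, ← e2, hA2,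
      hb2, hb1]
    field_simp
    ring
  · have h1 := (tendsto_exp_mul_thetaThree_succ 1).div tendsto_thetaThree one_ne_zero
    have h2 := ((tendsto_exp_mul_thetaThree_succ 0).mul
      (tendsto_of_tendsto_exp_mul (tendsto_exp_mul_thetaThree_succ 0))).div
      (tendsto_thetaThree.pow 2) (by norm_num)
    have h3 := (tendsto_thetaFour.pow 4).mul tendsto_exp_mul_thetaThree_pow_sub_thetaFour_pow
    have h := (h1.sub (h2.const_mul 3)).sub (h3.div_const 8)
    norm_num at h
    refine h.congr fun s => ?_
    ring

/-- The modular form `∑ (m⁴ - 12 m² n² + 4 n⁴) exp (-π s (m² + 2 n²))` in terms of thetas. -/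
noncomputable def latticeTheta (s : ℝ) : ℝ :=
  thetaThree 2 s * thetaThree 0 (2 * s) - 12 * (thetaThree 1 s * thetaThree 1 (2 * s)) +
    4 * (thetaThree 0 s * thetaThree 2 (2 * s))

lemma four_mul_latticeTheta {s : ℝ} (hs : 0 < s) :
    4 * latticeTheta s = (thetaThree 0 s ^ 2 - thetaFour 0 s ^ 2) / 2 * thetaFour 0 s ^ 2 *
      thetaThree 0 s * ((2 * thetaThree 0 s ^ 4 +
      3 * (thetaThree 0 s ^ 2 * thetaFour 0 s ^ 2) - thetaFour 0 s ^ 4) / 2) *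
      thetaThree 0 (2 * s) := by
  have hs2 : 0 < 2 * s := by positivity
  have e1 := thetaThree_sq_add_thetaFour_sq hs
  have e2 := thetaThree_mul_thetaFour hs
  have e3 := thetaThree_mul_deriv_add hs
  have e5 := thetaThree_deriv_thetaFour_sub hs
  have e7 := thetaThree_ode hs
  have e8 := thetaThree_ode hs2
  have hA := thetaThree_pos hs2
  have ha := thetaThree_pos hs
  have hb := thetaFour_pos hs
  rw [latticeTheta]
  generalize thetaThree 0 s = a at *
  generalize thetaThree 1 s = a1 at *
  generalize thetaThree 2 s = a2 at *
  generalize thetaFour 0 s = b at *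
  generalize thetaFour 1 s = b1 at *
  generalize thetaThree 0 (2 * s) = A at *
  generalize thetaThree 1 (2 * s) = A1 at *
  generalize thetaThree 2 (2 * s) = A2 at *
  generalize thetaFour 0 (2 * s) = B at *
  have hA2 : A ^ 2 = (a ^ 2 + b ^ 2) / 2 := by linarith
  have hb1 : b1 = b * (a1 / a - (a ^ 4 - b ^ 4) / 4) := by
    field_simp
    linear_combination -e5
  have hA1 : A1 / A = (a * a1 + b * b1) / (4 * A ^ 2) := by
    rw [e3]; field_simp
  rw [show A ^ 4 = (A ^ 2) ^ 2 by ring, show B ^ 4 = (B ^ 2) ^ 2 by ring, ← e2] at e8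
  have : a2 * A - 12 * (a1 * A1) + 4 * (a * A2) =
      a * A * (a2 / a - 12 * (a1 / a * (A1 / A)) + 4 * (A2 / A)) := by
    field_simp
  rw [this, sub_eq_iff_eq_add.1 e7, sub_eq_iff_eq_add.1 e8, hA1, hA2, hb1]
  field_simp
  ring

/-- The elliptic integral attached to the arithmetic-geometric mean. -/
noncomputable def agmIntegral (x z : ℝ) : ℝ :=
  ∫ u in Set.Ioi (0 : ℝ), 1 / √((u ^ 2 + x ^ 2) * (u ^ 2 + z ^ 2))

lemma image_sub_div_Ioi {c : ℝ} (hc : 0 < c) :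
    (fun u : ℝ => u - c / u) '' Set.Ioi 0 = Set.univ := by
  refine Set.eq_univ_of_forall fun v => ?_
  have h1 : √(v ^ 2 + 4 * c) ^ 2 = v ^ 2 + 4 * c := Real.sq_sqrt (by positivity)
  have h2 : |v| < √(v ^ 2 + 4 * c) := by
    rw [← Real.sqrt_sq_eq_abs]
    exact Real.sqrt_lt_sqrt (sq_nonneg v) (by linarith)
  have h3 : 0 < (v + √(v ^ 2 + 4 * c)) / 2 := by linarith [neg_abs_le v]
  refine ⟨(v + √(v ^ 2 + 4 * c)) / 2, h3, ?_⟩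
  have h4 : v + √(v ^ 2 + 4 * c) ≠ 0 := by linarith
  simp only
  field_simp
  nlinarith

/-- The Cauchy–Schlömilch substitution. -/
lemma integral_eq_integral_Ioi_sub_div (F : ℝ → ℝ) {c : ℝ} (hc : 0 < c) :
    ∫ v, F v = ∫ u in Set.Ioi (0 : ℝ), (1 + c / u ^ 2) * F (u - c / u) := by
  have h := integral_image_eq_integral_abs_deriv_smul (f := fun u : ℝ => u - c / u)
    (f' := fun u => 1 + c / u ^ 2) (s := Set.Ioi 0) measurableSet_Ioi (fun u hu => ?_)
    (fun u hu w hw huw => ?_) F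
  · rw [image_sub_div_Ioi hc, setIntegral_univ] at h
    rw [h]
    refine setIntegral_congr_fun measurableSet_Ioi fun u hu => ?_
    have : 0 < u := hu
    simp only [smul_eq_mul]
    rw [abs_of_pos (by positivity)]
  · have hu' : u ≠ 0 := (Set.mem_Ioi.1 hu).ne'
    refine (((hasDerivAt_id u).sub ((hasDerivAt_inv hu').const_mul c)).congr_deriv
      ?_).hasDerivWithinAt
    field_simp
    ring
  · have hu' : 0 < u := hu
    have hw' : 0 < w := hw
    simp only at huw
    have : (u - w) * (1 + c / (u * w)) = 0 := by
      have : (u - w) * (1 + c / (u * w)) = (u - c / u) - (w - c / w) := by field_simp; ring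
      rw [this, huw, sub_self]
    exact sub_eq_zero.1 ((mul_eq_zero.1 this).resolve_right (by positivity))

lemma two_mul_agmIntegral (x z : ℝ) :
    2 * agmIntegral x z = ∫ v, 1 / √((v ^ 2 + x ^ 2) * (v ^ 2 + z ^ 2)) := by
  have := integral_comp_abs (f := fun u : ℝ => 1 / √((u ^ 2 + x ^ 2) * (u ^ 2 + z ^ 2)))
  simp only [sq_abs] at this
  rw [this, agmIntegral]

/-- Gauss's invariance of the elliptic integral under one step of the
arithmetic-geometric mean. -/
lemma agmIntegral_mean {x z y w : ℝ} (hx : 0 < x) (hz : 0 < z) (hy : y = (x + z) / 2)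
    (hw : w ^ 2 = x * z) : agmIntegral y w = agmIntegral x z := by
  have h1 := Measure.integral_comp_div
    (fun v : ℝ => 1 / √((v ^ 2 + y ^ 2) * (v ^ 2 + w ^ 2))) 2
  rw [← two_mul_agmIntegral, integral_eq_integral_Ioi_sub_div _ (mul_pos hx hz)] at h1
  have h2 : ∫ u in Set.Ioi (0 : ℝ), (1 + x * z / u ^ 2) * (1 / √((((u - x * z / u) / 2) ^ 2 +
      y ^ 2) * (((u - x * z / u) / 2) ^ 2 + w ^ 2))) = 4 * agmIntegral x z := by
    rw [agmIntegral, ← integral_const_mul]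
    refine setIntegral_congr_fun measurableSet_Ioi fun u hu => ?_
    have hu : 0 < u := hu
    have h3 : (((u - x * z / u) / 2) ^ 2 + y ^ 2) * (((u - x * z / u) / 2) ^ 2 + w ^ 2) =
        ((u ^ 2 + x * z) / (4 * u ^ 2)) ^ 2 * ((u ^ 2 + x ^ 2) * (u ^ 2 + z ^ 2)) := by
      rw [hy, hw]
      field_simp
      ring
    rw [h3, Real.sqrt_mul (sq_nonneg _), Real.sqrt_sq (by positivity)]
    have : 0 < √((u ^ 2 + x ^ 2) * (u ^ 2 + z ^ 2)) := Real.sqrt_pos.2 (by positivity)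
    field_simp
  rw [h2] at h1
  norm_num at h1
  linarith

lemma agmIntegral_const_mul {t : ℝ} (ht : 0 < t) (x z : ℝ) :
    agmIntegral (t * x) (t * z) = t⁻¹ * agmIntegral x z := by
  have h := integral_comp_mul_left_Ioi
    (fun u : ℝ => 1 / √((u ^ 2 + (t * x) ^ 2) * (u ^ 2 + (t * z) ^ 2))) 0 ht
  rw [mul_zero, smul_eq_mul] at h
  have h2 : agmIntegral (t * x) (t * z) = t * ∫ u in Set.Ioi (0 : ℝ),
      1 / √(((t * u) ^ 2 + (t * x) ^ 2) * ((t * u) ^ 2 + (t * z) ^ 2)) := by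
    rw [h, agmIntegral]
    field_simp
  rw [h2, agmIntegral, ← integral_const_mul, ← integral_const_mul]
  refine setIntegral_congr_fun measurableSet_Ioi fun u _ => ?_
  rw [show ((t * u) ^ 2 + (t * x) ^ 2) * ((t * u) ^ 2 + (t * z) ^ 2) =
    (t ^ 2) ^ 2 * ((u ^ 2 + x ^ 2) * (u ^ 2 + z ^ 2)) by ring, Real.sqrt_mul (sq_nonneg _),
    Real.sqrt_sq (by positivity)]
  field_simp

lemma agmIntegral_self {x : ℝ} (hx : 0 < x) : agmIntegral x x = π / 2 / x := by
  have h := agmIntegral_const_mul hx 1 1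
  rw [mul_one] at h
  have h0 := integral_Ioi_inv_one_add_sq (i := 0)
  rw [Real.arctan_zero, sub_zero] at h0
  rw [h, agmIntegral, ← h0, div_eq_inv_mul]
  congr 1
  refine setIntegral_congr_fun measurableSet_Ioi fun u _ => ?_
  rw [Real.sqrt_mul_self (by positivity), one_div, one_pow, add_comm]

lemma integrable_one_div_sqrt_mul {x z : ℝ} (hx : 0 < x) (hz : 0 < z) :
    IntegrableOn (fun u : ℝ => 1 / √((u ^ 2 + x ^ 2) * (u ^ 2 + z ^ 2))) (Set.Ioi 0) := by
  have hm : 0 < min 1 (min x z) := by positivity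
  have h1 := (integrable_inv_one_add_sq.const_mul ((min 1 (min x z)) ^ 2)⁻¹).integrableOn
    (s := Set.Ioi (0 : ℝ))
  refine Integrable.mono' h1 (by measurability) (ae_of_all _ fun u => ?_)
  generalize hmm : min 1 (min x z) = m at *
  have m1 : m ≤ 1 := hmm ▸ min_le_left _ _
  have m2 : m ≤ x := hmm ▸ (min_le_right _ _).trans (min_le_left _ _)
  have m3 : m ≤ z := hmm ▸ (min_le_right _ _).trans (min_le_right _ _)
  rw [Real.norm_of_nonneg (by positivity), ← mul_inv, one_div]
  refine inv_anti₀ (by positivity) ?_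
  refine Real.le_sqrt_of_sq_le ?_
  rw [sq]
  have p1 : m ^ 2 ≤ 1 := by nlinarith
  have p2 : m ^ 2 ≤ x ^ 2 := by nlinarith
  have p3 : m ^ 2 ≤ z ^ 2 := by nlinarith
  have p4 : m ^ 2 * (1 + u ^ 2) ≤ u ^ 2 + x ^ 2 := by nlinarith [sq_nonneg u]
  have p5 : m ^ 2 * (1 + u ^ 2) ≤ u ^ 2 + z ^ 2 := by nlinarith [sq_nonneg u]
  exact mul_le_mul p4 p5 (by positivity) (by positivity)

lemma agmIntegral_anti {x z x' z' : ℝ} (hx : 0 < x) (hz : 0 < z) (hx' : x ≤ x') (hz' : z ≤ z') :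
    agmIntegral x' z' ≤ agmIntegral x z := by
  refine setIntegral_mono_on (integrable_one_div_sqrt_mul (hx.trans_le hx') (hz.trans_le hz'))
    (integrable_one_div_sqrt_mul hx hz) measurableSet_Ioi fun u hu => ?_
  have : 0 < u := hu
  gcongr

lemma tendsto_agmIntegral_one {f g : ℝ → ℝ} {l : Filter ℝ} (hf : Tendsto f l (𝓝 1))
    (hg : Tendsto g l (𝓝 1)) : Tendsto (fun s => agmIntegral (f s) (g s)) l (𝓝 (π / 2)) := by
  have h1 : Tendsto (fun s => π / 2 / max (f s) (g s)) l (𝓝 (π / 2)) := by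
    have := (tendsto_const_nhds (x := π / 2)).div (hf.max hg) (by simp)
    simpa [Pi.div_def] using this
  have h2 : Tendsto (fun s => π / 2 / min (f s) (g s)) l (𝓝 (π / 2)) := by
    have := (tendsto_const_nhds (x := π / 2)).div (hf.min hg) (by simp)
    simpa [Pi.div_def] using this
  refine tendsto_of_tendsto_of_tendsto_of_le_of_le' h1 h2 ?_ ?_
  · filter_upwards [hf.eventually_const_lt one_pos, hg.eventually_const_lt one_pos] with s h3 h4
    rw [← agmIntegral_self (lt_max_of_lt_left h3)]
    exact agmIntegral_anti h3 h4 (le_max_left _ _) (le_max_right _ _)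
  · filter_upwards [hf.eventually_const_lt one_pos, hg.eventually_const_lt one_pos] with s h3 h4
    rw [← agmIntegral_self (lt_min h3 h4)]
    exact agmIntegral_anti (lt_min h3 h4) (lt_min h3 h4) (min_le_left _ _) (min_le_right _ _)

lemma agmIntegral_theta {s : ℝ} (hs : 0 < s) :
    agmIntegral (thetaThree 0 s ^ 2) (thetaFour 0 s ^ 2) = π / 2 := by
  refine eq_of_doubling_invariant
    (f := fun s => agmIntegral (thetaThree 0 s ^ 2) (thetaFour 0 s ^ 2)) (fun t ht => ?_)
    (tendsto_agmIntegral_one (by simpa using tendsto_thetaThree.pow 2)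
      (by simpa using tendsto_thetaFour.pow 2)) hs
  refine agmIntegral_mean (pow_pos (thetaThree_pos ht) 2) (pow_pos (thetaFour_pos ht) 2) ?_ ?_
  · linarith [thetaThree_sq_add_thetaFour_sq ht]
  · rw [← thetaThree_mul_thetaFour ht]; ring

lemma image_inv_sqrt_one_add_sq :
    (fun u : ℝ => (√(1 + u ^ 2))⁻¹) '' Set.Ioi 0 = Set.Ioo 0 1 := by
  ext x
  constructor
  · rintro ⟨u, hu, rfl⟩
    have hu : 0 < u := hu
    have h : 1 < √(1 + u ^ 2) := Real.lt_sqrt_of_sq_lt (by nlinarith)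
    exact ⟨by positivity, inv_lt_one_of_one_lt₀ h⟩
  · rintro ⟨h0, h1⟩
    have h2 : 0 < x⁻¹ ^ 2 - 1 := by
      have := one_lt_inv₀ h0 |>.2 h1
      nlinarith
    refine ⟨√(x⁻¹ ^ 2 - 1), Real.sqrt_pos.2 h2, ?_⟩
    simp only
    rw [Real.sq_sqrt h2.le, add_sub_cancel, Real.sqrt_sq (by positivity), inv_inv]

lemma EllK_eq_agmIntegral {k k' : ℝ} (hk : k ^ 2 + k' ^ 2 = 1) :
    EllK k = agmIntegral 1 k' := by
  rw [EllK, intervalIntegral.integral_of_le zero_le_one, integral_Ioc_eq_integral_Ioo,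
    ← image_inv_sqrt_one_add_sq, integral_image_eq_integral_abs_deriv_smul
      (f' := fun u => -(u / √(1 + u ^ 2)) / (√(1 + u ^ 2)) ^ 2) measurableSet_Ioi
      (fun u hu => ?_) (fun u hu w hw huw => ?_)]
  · refine setIntegral_congr_fun measurableSet_Ioi fun u hu => ?_
    have hu : 0 < u := hu
    have h1 : 0 < 1 + u ^ 2 := by positivity
    have h2 : 0 < √(1 + u ^ 2) := Real.sqrt_pos.2 h1
    have h3 : √(1 + u ^ 2) ^ 2 = 1 + u ^ 2 := Real.sq_sqrt h1.le
    have h4 : (1 - (√(1 + u ^ 2))⁻¹ ^ 2) * (1 - k ^ 2 * (√(1 + u ^ 2))⁻¹ ^ 2) =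
        (u / (1 + u ^ 2)) ^ 2 * (u ^ 2 + k' ^ 2) := by
      rw [inv_pow, h3, show k' ^ 2 = 1 - k ^ 2 by linarith]
      field_simp
      ring
    simp only [smul_eq_mul]
    rw [h4, Real.sqrt_mul (sq_nonneg _), Real.sqrt_sq (by positivity), h3, neg_div, abs_neg,
      abs_of_pos (by positivity), one_pow, add_comm (u ^ 2) 1, Real.sqrt_mul h1.le]
    field_simp
  · have h1 : 0 < 1 + u ^ 2 := by positivity
    have h := (((hasDerivAt_pow 2 u).const_add 1).sqrt h1.ne').inv (Real.sqrt_pos.2 h1).ne'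
    refine (h.congr_deriv ?_).hasDerivWithinAt
    norm_num
    ring
  · have hu : 0 < u := hu
    have hw : 0 < w := hw
    have := (Real.sqrt_inj (by positivity) (by positivity)).1 (inv_injective huw)
    exact (pow_left_inj₀ hu.le hw.le two_ne_zero).1 (by linarith)

/-- The elliptic modulus in terms of thetas at the doubled argument. -/
noncomputable def thetaModulus (s : ℝ) : ℝ :=
  (thetaThree 0 s ^ 2 - thetaFour 0 s ^ 2) / (thetaThree 0 s ^ 2 + thetaFour 0 s ^ 2)

lemma hasDerivAt_thetaModulus {s : ℝ} (hs : 0 < s) :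
    HasDerivAt thetaModulus (-(π * (thetaThree 0 s ^ 2 * thetaFour 0 s ^ 2 *
      (thetaThree 0 s ^ 4 - thetaFour 0 s ^ 4) / (thetaThree 0 s ^ 2 + thetaFour 0 s ^ 2) ^ 2)))
      s := by
  have ha := thetaThree_pos hs
  have hb := thetaFour_pos hs
  have h3 := (hasDerivAt_thetaThree 0 hs).fun_pow 2
  have h4 := (hasDerivAt_thetaFour 0 hs).fun_pow 2
  have h := (h3.fun_sub h4).fun_div (h3.fun_add h4) (by positivity)
  refine h.congr_deriv ?_
  have e := thetaThree_deriv_thetaFour_sub hs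
  norm_num
  generalize thetaThree 0 s = a at *
  generalize thetaThree 1 s = a1 at *
  generalize thetaFour 0 s = b at *
  generalize thetaFour 1 s = b1 at *
  field_simp
  linear_combination -(a * b) * e

lemma thetaModulus_mem_Ioo {s : ℝ} (hs : 0 < s) : thetaModulus s ∈ Set.Ioo (0 : ℝ) 1 := by
  have ha := thetaThree_pos hs
  have hb := thetaFour_pos hs
  have hd := sub_pos.2 (thetaFour_sq_lt_thetaThree_sq hs)
  refine ⟨by unfold thetaModulus; positivity, ?_⟩
  rw [thetaModulus, div_lt_one (by positivity)]
  nlinarith [pow_pos hb 2]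

lemma thetaModulus_pow_four_pos {s : ℝ} (hs : 0 < s) :
    0 < thetaThree 0 s ^ 4 - thetaFour 0 s ^ 4 :=
  sub_pos.2 (pow_lt_pow_left₀ (thetaFour_lt_thetaThree hs) (thetaFour_pos hs).le four_ne_zero)

lemma strictAntiOn_thetaModulus : StrictAntiOn thetaModulus (Set.Ioi 0) := by
  refine strictAntiOn_of_deriv_neg (convex_Ioi 0)
    (fun s hs => (hasDerivAt_thetaModulus hs).continuousAt.continuousWithinAt) fun s hs => ?_
  rw [interior_Ioi] at hs
  have ha := thetaThree_pos hs
  have hb := thetaFour_pos hs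
  have hd := thetaModulus_pow_four_pos hs
  rw [(hasDerivAt_thetaModulus hs).deriv]
  exact neg_neg_of_pos (by positivity)

lemma tendsto_thetaModulus_atTop : Tendsto thetaModulus atTop (𝓝 0) := by
  have h := ((tendsto_thetaThree.pow 2).sub (tendsto_thetaFour.pow 2)).div
    ((tendsto_thetaThree.pow 2).add (tendsto_thetaFour.pow 2)) (by norm_num)
  norm_num at h
  exact h

lemma one_add_thetaModulus {s : ℝ} (hs : 0 < s) :
    1 + thetaModulus s = (thetaThree 0 s / thetaThree 0 (2 * s)) ^ 2 := by
  have ha := thetaThree_pos hs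
  have hb := thetaFour_pos hs
  have hA := thetaThree_pos (mul_pos two_pos hs)
  have e := thetaThree_sq_add_thetaFour_sq hs
  rw [div_pow, show thetaThree 0 (2 * s) ^ 2 = (thetaThree 0 s ^ 2 + thetaFour 0 s ^ 2) / 2 by
    linarith, thetaModulus]
  field_simp
  ring

lemma tendsto_thetaModulus_zero : Tendsto thetaModulus (𝓝[>] 0) (𝓝 1) := by
  have h1 := tendsto_thetaThree.comp (tendsto_inv_nhdsGT_zero (𝕜 := ℝ))
  have h2 := tendsto_thetaThree.comp ((tendsto_inv_nhdsGT_zero (𝕜 := ℝ)).const_mul_atTop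
    (show (0 : ℝ) < 2⁻¹ by norm_num))
  have h := (((h1.div h2 one_ne_zero).pow 2).const_mul 2).sub_const 1
  norm_num at h
  refine h.congr' ?_
  filter_upwards [self_mem_nhdsWithin] with s hs
  have hs : 0 < s := hs
  have e := one_add_thetaModulus hs
  have e1 := thetaThree_zero_inv hs
  have e2 := thetaThree_zero_inv (mul_pos two_pos hs)
  have hA := thetaThree_pos (mul_pos two_pos hs)
  have hs' := Real.sqrt_pos.2 hs
  rw [mul_inv] at e2
  rw [eq_sub_of_add_eq' e]
  change 2 * (thetaThree 0 s⁻¹ / thetaThree 0 (1 / 2 * s⁻¹)) ^ 2 - 1 = _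
  rw [one_div, e1, e2, Real.sqrt_mul zero_le_two, div_pow, div_pow,
    mul_pow, mul_pow, mul_pow, Real.sq_sqrt zero_le_two]
  field_simp

lemma image_thetaModulus : thetaModulus '' Set.Ioi 0 = Set.Ioo 0 1 := by
  refine Set.Subset.antisymm ?_ fun y hy => ?_
  · rintro _ ⟨s, hs, rfl⟩
    exact thetaModulus_mem_Ioo hs
  · obtain ⟨s, hsy, hs⟩ := ((tendsto_thetaModulus_atTop.eventually_lt_const hy.1).and
      (eventually_gt_atTop 0)).exists
    obtain ⟨t, hty, ht⟩ := ((tendsto_thetaModulus_zero.eventually_const_lt hy.2).and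
      self_mem_nhdsWithin).exists
    exact isPreconnected_Ioi.intermediate_value hs ht
      (fun s hs => (hasDerivAt_thetaModulus hs).continuousAt.continuousWithinAt)
      ⟨hsy.le, hty.le⟩

lemma EllK_thetaModulus {s : ℝ} (hs : 0 < s) :
    EllK (thetaModulus s) = thetaThree 0 (2 * s) ^ 2 * (π / 2) := by
  have hs2 := mul_pos two_pos hs
  have ha := thetaThree_pos hs
  have hb := thetaFour_pos hs
  have hA := thetaThree_pos hs2
  have e := thetaThree_sq_add_thetaFour_sq hs
  have e2 := thetaThree_mul_thetaFour hs
  rw [EllK_eq_agmIntegral (k' := thetaFour 0 (2 * s) ^ 2 / thetaThree 0 (2 * s) ^ 2),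
    ← agmIntegral_theta hs2]
  · have h := agmIntegral_const_mul (pow_pos hA 2) 1
      (thetaFour 0 (2 * s) ^ 2 / thetaThree 0 (2 * s) ^ 2)
    rw [mul_one, mul_div_cancel₀ _ (by positivity)] at h
    rw [h, mul_inv_cancel_left₀ (by positivity)]
  · rw [← e2, thetaModulus, show thetaThree 0 (2 * s) ^ 2 =
      (thetaThree 0 s ^ 2 + thetaFour 0 s ^ 2) / 2 by linarith]
    field_simp
    ring

/-- The integral over the modulus as an integral along the imaginary axis. -/
lemma integral_EllK_eq_integral_latticeTheta :
    ∫ k in (0:ℝ)..(1:ℝ), (2 + 3 * k - k^2) / Real.sqrt (1 + k) * (EllK k)^3 =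
      π ^ 4 / 2 * ∫ s in Set.Ioi (0 : ℝ), latticeTheta s := by
  rw [intervalIntegral.integral_of_le zero_le_one, integral_Ioc_eq_integral_Ioo,
    ← image_thetaModulus, integral_image_eq_integral_abs_deriv_smul measurableSet_Ioi
      (fun s hs => (hasDerivAt_thetaModulus hs).hasDerivWithinAt)
      strictAntiOn_thetaModulus.injOn, ← integral_const_mul]
  refine setIntegral_congr_fun measurableSet_Ioi fun s hs => ?_
  have hs : 0 < s := hs
  have ha := thetaThree_pos hs
  have hb := thetaFour_pos hs
  have hA := thetaThree_pos (mul_pos two_pos hs)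
  have hd := thetaModulus_pow_four_pos hs
  have e := thetaThree_sq_add_thetaFour_sq hs
  have e2 := four_mul_latticeTheta hs
  simp only [smul_eq_mul]
  rw [abs_neg, abs_of_pos (by positivity), EllK_thetaModulus hs, one_add_thetaModulus hs,
    Real.sqrt_sq (by positivity), thetaModulus,
    show latticeTheta s = (4 * latticeTheta s) / 4 by ring, e2]
  have hA2 : thetaThree 0 (2 * s) ^ 2 = (thetaThree 0 s ^ 2 + thetaFour 0 s ^ 2) / 2 := by
    linarith
  rw [hA2]
  generalize thetaThree 0 s = a at *
  generalize thetaFour 0 s = b at *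
  generalize thetaThree 0 (2 * s) = A at *
  field_simp
  ring

lemma hasDerivAt_thetaThree_inv (j : ℕ) {s : ℝ} (hs : 0 < s) :
    HasDerivAt (fun t => thetaThree j t⁻¹) (π * thetaThree (j + 1) s⁻¹ / s ^ 2) s := by
  have := (hasDerivAt_thetaThree j (inv_pos.2 hs)).comp s (hasDerivAt_inv hs.ne')
  exact this.congr_deriv (by ring)

lemma thetaThree_one_inv {s : ℝ} (hs : 0 < s) :
    thetaThree 1 s⁻¹ = √s * (s * thetaThree 0 s / (2 * π) - s ^ 2 * thetaThree 1 s) := by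
  have h := eq_of_hasDerivAt_of_eqOn_pos hs (fun t ht => thetaThree_zero_inv ht)
    (hasDerivAt_thetaThree_inv 0 hs)
    ((Real.hasDerivAt_sqrt hs.ne').fun_mul (hasDerivAt_thetaThree 0 hs))
  have hr := Real.sqrt_pos.2 hs
  have hr2 := Real.sq_sqrt hs.le
  have hpi := Real.pi_pos
  norm_num at h
  generalize √s = r at *
  subst hr2
  field_simp at h ⊢
  linear_combination h

lemma thetaThree_two_inv {s : ℝ} (hs : 0 < s) :
    thetaThree 2 s⁻¹ = √s * (3 * s ^ 2 * thetaThree 0 s / (4 * π ^ 2) -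
      3 * s ^ 3 * thetaThree 1 s / π + s ^ 4 * thetaThree 2 s) := by
  have h := eq_of_hasDerivAt_of_eqOn_pos hs (fun t ht => thetaThree_one_inv ht)
    (hasDerivAt_thetaThree_inv 1 hs)
    ((Real.hasDerivAt_sqrt hs.ne').fun_mul
      ((((hasDerivAt_id s).fun_mul (hasDerivAt_thetaThree 0 hs)).div_const (2 * π)).fun_sub
        ((hasDerivAt_pow 2 s).fun_mul (hasDerivAt_thetaThree 1 hs))))
  have hr := Real.sqrt_pos.2 hs
  have hr2 := Real.sq_sqrt hs.le
  have hpi := Real.pi_pos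
  norm_num at h
  generalize √s = r at *
  subst hr2
  field_simp at h ⊢
  linear_combination h

/-- The transformation of `latticeTheta` under the Fricke involution. -/
lemma latticeTheta_inv {u : ℝ} (hu : 0 < u) :
    latticeTheta (2 * u)⁻¹ = 4 * √2 * u ^ 5 * latticeTheta u := by
  have hu2 := mul_pos two_pos hu
  have e : 2 * (2 * u)⁻¹ = u⁻¹ := by field_simp
  have hr := Real.sqrt_pos.2 hu
  have hr2 := Real.sq_sqrt hu.le
  have hpi := Real.pi_pos
  rw [latticeTheta, e, thetaThree_zero_inv hu, thetaThree_one_inv hu, thetaThree_two_inv hu,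
    thetaThree_zero_inv hu2, thetaThree_one_inv hu2, thetaThree_two_inv hu2, latticeTheta,
    Real.sqrt_mul zero_le_two]
  generalize thetaThree 0 (2 * u) = A at *
  generalize thetaThree 1 (2 * u) = A1 at *
  generalize thetaThree 2 (2 * u) = A2 at *
  generalize √u = r at *
  subst hr2
  field_simp
  ring

lemma image_inv_two_mul_Ioi : (fun u : ℝ => (2 * u)⁻¹) '' Set.Ioi 0 = Set.Ioi 0 := by
  ext s
  constructor
  · rintro ⟨u, hu, rfl⟩
    have : 0 < u := hu
    exact Set.mem_Ioi.2 (by positivity)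
  · intro hs
    have hs : 0 < s := hs
    exact ⟨(2 * s)⁻¹, Set.mem_Ioi.2 (by positivity), by field_simp⟩

lemma integral_latticeTheta :
    ∫ s in Set.Ioi (0 : ℝ), latticeTheta s =
      2 * √2 * ∫ u in Set.Ioi (0 : ℝ), u ^ 3 * latticeTheta u := by
  conv_lhs => rw [← image_inv_two_mul_Ioi]
  rw [integral_image_eq_integral_abs_deriv_smul (f' := fun u => -(2 / (2 * u) ^ 2))
    measurableSet_Ioi (fun u hu => ?_) (fun u _ w _ huw => ?_), ← integral_const_mul]
  · refine setIntegral_congr_fun measurableSet_Ioi fun u hu => ?_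
    have hu : 0 < u := hu
    simp only [smul_eq_mul]
    rw [abs_neg, abs_of_pos (by positivity), latticeTheta_inv hu]
    field_simp
    ring
  · have hu : 0 < u := hu
    have h := ((hasDerivAt_id u).const_mul 2).inv (c := fun u => 2 * u) (by positivity)
    refine (h.congr_deriv ?_).hasDerivWithinAt
    ring
  · simpa using huw

/-- The quartic form `Re (m + i√2 n)⁴`. -/
def quarticForm (p : ℤ × ℤ) : ℝ :=
  (p.1 : ℝ) ^ 4 - 12 * (p.1 : ℝ) ^ 2 * (p.2 : ℝ) ^ 2 + 4 * (p.2 : ℝ) ^ 4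

/-- The quadratic form `|m + i√2 n|²`. -/
def quadraticForm (p : ℤ × ℤ) : ℝ := (p.1 : ℝ) ^ 2 + 2 * (p.2 : ℝ) ^ 2

lemma quadraticForm_eq_zero {p : ℤ × ℤ} (hp : quadraticForm p ≤ 0) : quarticForm p = 0 := by
  have h1 : (p.1 : ℝ) ^ 2 = 0 := by
    unfold quadraticForm at hp
    nlinarith [sq_nonneg (p.1 : ℝ), sq_nonneg (p.2 : ℝ)]
  have h2 : (p.2 : ℝ) ^ 2 = 0 := by
    unfold quadraticForm at hp
    nlinarith [sq_nonneg (p.1 : ℝ), sq_nonneg (p.2 : ℝ)]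
  rw [quarticForm, show (p.1 : ℝ) ^ 4 = ((p.1 : ℝ) ^ 2) ^ 2 by ring,
    show (p.2 : ℝ) ^ 4 = ((p.2 : ℝ) ^ 2) ^ 2 by ring, h1, h2]
  norm_num

lemma abs_quarticForm_le (p : ℤ × ℤ) : |quarticForm p| ≤ 3 * quadraticForm p ^ 2 := by
  unfold quarticForm quadraticForm
  generalize (p.1 : ℝ) = m
  generalize (p.2 : ℝ) = n
  have := sq_nonneg (m ^ 2)
  have := sq_nonneg (n ^ 2)
  have := sq_nonneg (m * n)
  rw [abs_le]
  constructor <;> nlinarith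

lemma latticeTheta_eq_tsum {s : ℝ} (hs : 0 < s) :
    latticeTheta s = ∑' p : ℤ × ℤ, quarticForm p * Real.exp (-(π * quadraticForm p * s)) := by
  have hs2 := mul_pos two_pos hs
  have hsum (j : ℕ) {t : ℝ} (ht : 0 < t) := (summable_thetaTerm abs_one_le_one j ht).norm
  have hprod (i j : ℕ) : thetaThree i s * thetaThree j (2 * s) = _ :=
    tsum_mul_tsum_of_summable_norm (hsum i hs) (hsum j hs2)
  have hps (i j : ℕ) := summable_mul_of_summable_norm (hsum i hs) (hsum j hs2)
  rw [latticeTheta, hprod, hprod, hprod, ← tsum_mul_left, ← tsum_mul_left,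
    ← (hps 2 0).tsum_sub ((hps 1 1).mul_left 12),
    ← ((hps 2 0).sub ((hps 1 1).mul_left 12)).tsum_add ((hps 0 2).mul_left 4)]
  refine tsum_congr fun p => ?_
  have he : Real.exp (-(π * quadraticForm p * s)) = Real.exp (-π * (p.1 : ℝ) ^ 2 * s) *
      Real.exp (-π * (p.2 : ℝ) ^ 2 * (2 * s)) := by
    rw [← Real.exp_add, quadraticForm]
    ring_nf
  rw [he, quarticForm]
  ring

lemma integral_pow_three_mul_exp {r : ℝ} (hr : 0 < r) :
    ∫ u in Set.Ioi (0 : ℝ), u ^ 3 * Real.exp (-(r * u)) = 6 / r ^ 4 := by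
  have h := Real.integral_rpow_mul_exp_neg_mul_Ioi (a := 4) four_pos hr
  have hG : Real.Gamma 4 = 6 := by
    rw [show (4 : ℝ) = (3 : ℕ) + 1 by norm_num, Real.Gamma_nat_eq_factorial]
    norm_num [Nat.factorial]
  rw [hG] at h
  norm_num at h
  rw [div_eq_inv_mul, ← h]

lemma integrableOn_pow_three_mul_exp {r : ℝ} (hr : 0 < r) :
    IntegrableOn (fun u : ℝ => u ^ 3 * Real.exp (-(r * u))) (Set.Ioi 0) := by
  have := integrableOn_rpow_mul_exp_neg_mul_rpow (p := 1) (s := 3) (b := r) (by norm_num)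
    one_pos hr
  refine this.congr_fun (fun u _ => ?_) measurableSet_Ioi
  simp only [Real.rpow_one, neg_mul]
  norm_cast

/-- The point `i√2` of the upper half plane. -/
noncomputable def iSqrtTwo : UpperHalfPlane := ⟨Complex.I * (√2 : ℝ), by simp⟩

lemma norm_eisSummand_iSqrtTwo (p : ℤ × ℤ) :
    ‖EisensteinSeries.eisSummand 4 ![p.2, p.1] iSqrtTwo‖ = (quadraticForm p ^ 2)⁻¹ := by
  have h : ‖(p.2 : ℂ) * (iSqrtTwo : ℂ) + (p.1 : ℂ)‖ ^ 2 = quadraticForm p := by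
    rw [← Complex.normSq_eq_norm_sq, Complex.normSq_apply]
    have : √2 * √2 = (2 : ℝ) := Real.mul_self_sqrt zero_le_two
    simp [iSqrtTwo, quadraticForm]
    linear_combination (p.2 : ℝ) ^ 2 * this
  rw [EisensteinSeries.eisSummand, norm_zpow, ← h, ← pow_mul]
  norm_num [zpow_neg]

lemma re_eisSummand_iSqrtTwo (p : ℤ × ℤ) :
    (EisensteinSeries.eisSummand 4 ![p.2, p.1] iSqrtTwo).re =
      quarticForm p / quadraticForm p ^ 4 := by
  have hn := norm_eisSummand_iSqrtTwo p
  rw [EisensteinSeries.eisSummand] at hn ⊢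
  have h4 : (((![p.2, p.1] 0 : ℤ) : ℂ) * (iSqrtTwo : ℂ) + ((![p.2, p.1] 1 : ℤ) : ℂ)) ^ (-4 : ℤ) =
    ((((![p.2, p.1] 0 : ℤ) : ℂ) * (iSqrtTwo : ℂ) + ((![p.2, p.1] 1 : ℤ) : ℂ)) ^ 4)⁻¹ := by
    rw [zpow_neg]; norm_cast
  rw [h4] at hn ⊢
  rw [norm_inv, inv_inj] at hn
  rw [Complex.inv_re, Complex.normSq_eq_norm_sq, hn, ← pow_mul]
  congr 1
  have h2 : √2 ^ 2 = (2 : ℝ) := Real.sq_sqrt zero_le_two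
  have h24 : √2 ^ 4 = (4 : ℝ) := by rw [show √2 ^ 4 = (√2 ^ 2) ^ 2 by ring, h2]; norm_num
  have h3 : (((![p.2, p.1] 0 : ℤ) : ℂ) * (iSqrtTwo : ℂ) + ((![p.2, p.1] 1 : ℤ) : ℂ)) ^ 4 =
      ((quarticForm p : ℝ) : ℂ) + ((4 * p.1 ^ 3 * p.2 * √2 - 4 * p.1 * p.2 ^ 3 * √2 ^ 3 : ℝ) : ℂ) *
        Complex.I := by
    have hq : quarticForm p = p.1 ^ 4 - 6 * p.1 ^ 2 * p.2 ^ 2 * √2 ^ 2 + p.2 ^ 4 * √2 ^ 4 := by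
      rw [h2, h24, quarticForm]; ring
    rw [hq]
    simp only [iSqrtTwo, Matrix.cons_val_zero, Matrix.cons_val_one, UpperHalfPlane.coe_mk]
    push_cast
    have hI : Complex.I ^ 2 = -1 := Complex.I_sq
    have hI3 : Complex.I ^ 3 = -Complex.I := Complex.I_pow_three
    have hI4 : Complex.I ^ 4 = 1 := Complex.I_pow_four
    ring_nf
    rw [hI, hI3, hI4]
    ring
  rw [h3, Complex.add_re, Complex.re_ofReal_mul, Complex.ofReal_re, Complex.I_re, mul_zero,
    add_zero]

lemma summable_inv_quadraticForm_sq : Summable fun p : ℤ × ℤ => (quadraticForm p ^ 2)⁻¹ := by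
  have h := EisensteinSeries.summable_norm_eisSummand (k := 4) (by norm_num) iSqrtTwo
  have h2 := ((finTwoArrowEquiv ℤ).trans (Equiv.prodComm ℤ ℤ)).symm.summable_iff.2 h
  exact h2.congr fun p => norm_eisSummand_iSqrtTwo p

lemma integral_pow_three_mul_latticeTheta :
    ∫ u in Set.Ioi (0 : ℝ), u ^ 3 * latticeTheta u =
      6 / π ^ 4 * (∑' v, EisensteinSeries.eisSummand 4 v iSqrtTwo).re := by
  have hint (p : ℤ × ℤ) : IntegrableOn (fun u : ℝ =>
      quarticForm p * (u ^ 3 * Real.exp (-(π * quadraticForm p * u)))) (Set.Ioi 0) := by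
    by_cases hp : quadraticForm p ≤ 0
    · simp [quadraticForm_eq_zero hp]
    · exact (integrableOn_pow_three_mul_exp (mul_pos Real.pi_pos (not_le.1 hp))).const_mul _
  have hval (p : ℤ × ℤ) (c : ℝ) (hc : quadraticForm p ≤ 0 → c = 0) :
      ∫ u in Set.Ioi (0 : ℝ), c * (u ^ 3 * Real.exp (-(π * quadraticForm p * u))) =
        6 / π ^ 4 * (c / quadraticForm p ^ 4) := by
    by_cases hp : quadraticForm p ≤ 0
    · simp [hc hp]
    · rw [integral_const_mul,
        integral_pow_three_mul_exp (mul_pos Real.pi_pos (not_le.1 hp)), mul_pow]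
      have := Real.pi_pos
      have := not_le.1 hp
      field_simp
  have hnorm (p : ℤ × ℤ) : ∫ u in Set.Ioi (0 : ℝ),
      ‖quarticForm p * (u ^ 3 * Real.exp (-(π * quadraticForm p * u)))‖ =
        6 / π ^ 4 * (|quarticForm p| / quadraticForm p ^ 4) := by
    rw [← hval p _ fun hp => by rw [quadraticForm_eq_zero hp, abs_zero]]
    refine setIntegral_congr_fun measurableSet_Ioi fun u hu => ?_
    have hu : 0 < u := hu
    simp only [Real.norm_eq_abs]
    rw [abs_mul, abs_of_pos (by positivity : 0 < u ^ 3 * _)]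
  have hs : Summable fun p : ℤ × ℤ => ∫ u in Set.Ioi (0 : ℝ),
      ‖quarticForm p * (u ^ 3 * Real.exp (-(π * quadraticForm p * u)))‖ := by
    simp_rw [hnorm]
    refine Summable.mul_left _ ((summable_inv_quadraticForm_sq.mul_left 3).of_nonneg_of_le
      (fun p => by positivity) fun p => ?_)
    by_cases hp : quadraticForm p ≤ 0
    · rw [quadraticForm_eq_zero hp, abs_zero, zero_div]
      positivity
    · have hp := not_le.1 hp
      rw [div_le_iff₀ (by positivity)]
      refine (abs_quarticForm_le p).trans_eq ?_
      field_simp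
  have h := (hasSum_integral_of_summable_integral_norm hint hs).tsum_eq
  have h1 : ∫ u in Set.Ioi (0 : ℝ), u ^ 3 * latticeTheta u = ∫ u in Set.Ioi (0 : ℝ),
      ∑' p : ℤ × ℤ, quarticForm p * (u ^ 3 * Real.exp (-(π * quadraticForm p * u))) := by
    refine setIntegral_congr_fun measurableSet_Ioi fun u hu => ?_
    rw [latticeTheta_eq_tsum hu, ← tsum_mul_left]
    exact tsum_congr fun p => by ring
  have hsum := (EisensteinSeries.summable_norm_eisSummand (k := 4) (by norm_num) iSqrtTwo).of_norm
  rw [h1, ← h, Complex.re_tsum hsum, ← tsum_mul_left,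
    ← ((finTwoArrowEquiv ℤ).trans (Equiv.prodComm ℤ ℤ)).symm.tsum_eq]
  refine tsum_congr fun p => ?_
  rw [hval p _ quadraticForm_eq_zero]
  exact congrArg _ (re_eisSummand_iSqrtTwo p).symm

/-- The eighth power of the second Jacobi theta constant. -/
noncomputable def thetaTwoPowEight (τ : ℂ) : ℂ :=
  Complex.exp (2 * π * Complex.I * τ) * jacobiTheta₂ (τ / 2) τ ^ 8

lemma jacobiTheta₂_add_one_right (z τ : ℂ) :
    jacobiTheta₂ z (τ + 1) = jacobiTheta₂ (z + 1 / 2) τ := by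
  unfold jacobiTheta₂ jacobiTheta₂_term
  refine tsum_congr fun n => ?_
  obtain ⟨m, hm⟩ : ∃ m : ℤ, n ^ 2 - n = 2 * m := by
    obtain ⟨m, hm⟩ := (Int.even_mul_pred_self n)
    exact ⟨m, by linear_combination hm⟩
  have hm' : (n : ℂ) ^ 2 - n = 2 * m := by exact_mod_cast hm
  rw [Complex.exp_eq_exp_iff_exists_int]
  exact ⟨m, by linear_combination (π * Complex.I : ℂ) * hm'⟩

lemma thetaTwoPowEight_add_one (τ : ℂ) : thetaTwoPowEight (τ + 1) = thetaTwoPowEight τ := by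
  unfold thetaTwoPowEight
  rw [jacobiTheta₂_add_one_right, show (τ + 1) / 2 + 1 / 2 = τ / 2 + 1 by ring,
    jacobiTheta₂_add_left, show 2 * π * Complex.I * (τ + 1) =
      2 * π * Complex.I * τ + 2 * π * Complex.I by ring, Complex.exp_periodic]

lemma one_div_cpow_half_pow_eight (τ : ℂ) :
    (1 / (-Complex.I * τ) ^ (1 / 2 : ℂ)) ^ 8 = (τ ^ 4)⁻¹ := by
  have h : ((-Complex.I * τ) ^ (1 / 2 : ℂ)) ^ 2 = -Complex.I * τ := by
    rw [one_div, Complex.cpow_ofNat_inv_pow]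
  rw [div_pow, one_pow, show ((-Complex.I * τ) ^ (1 / 2 : ℂ)) ^ 8 =
    (((-Complex.I * τ) ^ (1 / 2 : ℂ)) ^ 2) ^ 4 by ring, h, mul_pow, neg_pow, Complex.I_pow_four]
  norm_num

lemma jacobiTheta₂_zero_pow_eight (τ : ℂ) :
    jacobiTheta₂ 0 τ ^ 8 = (τ ^ 4)⁻¹ * jacobiTheta₂ 0 (-1 / τ) ^ 8 := by
  rw [jacobiTheta₂_functional_equation, mul_pow, mul_pow, one_div_cpow_half_pow_eight]
  simp

lemma jacobiTheta₂_half_pow_eight {τ : ℂ} (hτ : τ ≠ 0) :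
    jacobiTheta₂ (1 / 2) τ ^ 8 = (τ ^ 4)⁻¹ * thetaTwoPowEight (-1 / τ) := by
  rw [jacobiTheta₂_functional_equation, mul_pow, mul_pow, one_div_cpow_half_pow_eight,
    thetaTwoPowEight, ← Complex.exp_nat_mul, ← jacobiTheta₂_neg_left, mul_assoc]
  congr 2
  · congr 1
    push_cast
    field_simp
    ring
  · congr 2
    field_simp

lemma thetaTwoPowEight_eq {τ : ℂ} (hτ : τ ≠ 0) :
    thetaTwoPowEight τ = (τ ^ 4)⁻¹ * jacobiTheta₂ (1 / 2) (-1 / τ) ^ 8 := by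
  rw [thetaTwoPowEight, jacobiTheta₂_functional_equation, mul_pow, mul_pow,
    one_div_cpow_half_pow_eight, ← Complex.exp_nat_mul]
  rw [show τ / 2 / τ = 1 / 2 by field_simp, ← mul_assoc, mul_left_comm, ← Complex.exp_add,
    show 2 * π * Complex.I * τ + ((8 : ℕ) : ℂ) * (-π * Complex.I * (τ / 2) ^ 2 / τ) = 0 by
    push_cast; field_simp; ring]
  simp

/-- The level-one weight-four combination of theta constants. -/
noncomputable def thetaEisenstein (τ : ℂ) : ℂ :=
  (thetaTwoPowEight τ + jacobiTheta₂ 0 τ ^ 8 + jacobiTheta₂ (1 / 2) τ ^ 8) / 2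

lemma thetaEisenstein_add_one (τ : ℂ) : thetaEisenstein (τ + 1) = thetaEisenstein τ := by
  unfold thetaEisenstein
  rw [thetaTwoPowEight_add_one, jacobiTheta₂_add_one_right, jacobiTheta₂_add_one_right,
    show (1 / 2 + 1 / 2 : ℂ) = 0 + 1 by norm_num, jacobiTheta₂_add_left, zero_add]
  ring

lemma thetaEisenstein_neg_inv {τ : ℂ} (hτ : τ ≠ 0) :
    thetaEisenstein (-1 / τ) = τ ^ 4 * thetaEisenstein τ := by
  unfold thetaEisenstein
  rw [jacobiTheta₂_zero_pow_eight, jacobiTheta₂_half_pow_eight hτ, thetaTwoPowEight_eq hτ]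
  field_simp
  ring

lemma differentiableAt_thetaEisenstein {τ : ℂ} (hτ : 0 < τ.im) :
    DifferentiableAt ℂ thetaEisenstein τ := by
  have h : DifferentiableAt ℂ (fun τ : ℂ => jacobiTheta₂ (τ / 2) τ) τ :=
    ((hasFDerivAt_jacobiTheta₂ (τ / 2) hτ).differentiableAt.comp τ
      (f := fun τ : ℂ => (τ / 2, τ)) (by fun_prop) :)
  have h0 := differentiableAt_jacobiTheta₂_snd 0 hτ
  have h1 := differentiableAt_jacobiTheta₂_snd (1 / 2) hτ
  unfold thetaEisenstein thetaTwoPowEight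
  fun_prop

lemma norm_jacobiTheta₂_half_mul_le {τ : ℂ} (hτ : 1 ≤ τ.im) :
    ‖jacobiTheta₂ (τ / 2) τ‖ ≤ ∑' n : ℤ, ‖jacobiTheta₂_term n (Complex.I / 2) Complex.I‖ := by
  have hs := ((summable_jacobiTheta₂_term_iff (Complex.I / 2) Complex.I).mpr (by simp)).norm
  refine tsum_of_norm_bounded hs.hasSum fun n => ?_
  rw [norm_jacobiTheta₂_term, norm_jacobiTheta₂_term, Real.exp_le_exp]
  have hn : (0 : ℝ) ≤ (n : ℝ) ^ 2 + n := by
    have : 0 ≤ n ^ 2 + n := by nlinarith [Int.le_self_sq (-n)]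
    exact_mod_cast this
  have h2 : (τ / 2).im = τ.im / 2 := by simp
  have h3 : (Complex.I / 2).im = 1 / 2 := by simp
  rw [h2, h3, Complex.I_im]
  nlinarith [mul_nonneg Real.pi_pos.le hn]

open UpperHalfPlane in
lemma tendsto_thetaEisenstein :
    Tendsto (fun τ : ℍ => thetaEisenstein τ) atImInfty (𝓝 1) := by
  have h3 : Tendsto (fun τ : ℍ => jacobiTheta₂ 0 τ) atImInfty (𝓝 1) := by
    have h := isBigO_at_im_infty_jacobiTheta_sub_one.trans_tendsto
      (((Real.tendsto_exp_neg_atTop_nhds_zero.comp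
        (tendsto_id.const_mul_atTop Real.pi_pos)).comp tendsto_comap).congr fun τ => by
          simp)
    have h' := (h.comp (tendsto_comap_iff.mpr tendsto_comap :
      Tendsto (fun τ : ℍ => (τ : ℂ)) atImInfty (comap Complex.im atTop))).add_const 1
    simpa [jacobiTheta_eq_jacobiTheta₂, Function.comp_def] using h'
  have h4 : Tendsto (fun τ : ℍ => jacobiTheta₂ (1 / 2) τ) atImInfty (𝓝 1) := by
    have hT : Tendsto (fun τ : ℍ => (1 : ℝ) +ᵥ τ) atImInfty atImInfty :=
      tendsto_comap_iff.mpr (tendsto_comap.congr fun τ => by simp)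
    refine (h3.comp hT).congr fun τ => ?_
    simp only [Function.comp_apply, coe_vadd]
    rw [Complex.ofReal_one, add_comm, jacobiTheta₂_add_one_right, zero_add]
  have h2 : Tendsto (fun τ : ℍ => thetaTwoPowEight τ) atImInfty (𝓝 0) := by
    have hexp : Tendsto (fun τ : ℍ => Complex.exp (2 * π * Complex.I * τ)) atImInfty (𝓝 0) := by
      simpa [Function.Periodic.qParam] using qParam_tendsto_atImInfty one_pos
    refine hexp.zero_mul_isBoundedUnder_le ?_
    refine isBoundedUnder_of_eventually_le
      (a := (∑' n : ℤ, ‖jacobiTheta₂_term n (Complex.I / 2) Complex.I‖) ^ 8) ?_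
    filter_upwards [tendsto_comap.eventually_ge_atTop 1] with τ hτ
    simp only [Function.comp_apply, norm_pow]
    exact pow_le_pow_left₀ (norm_nonneg _) (norm_jacobiTheta₂_half_mul_le hτ) 8
  have := ((h2.add (h3.pow 8)).add (h4.pow 8)).div_const 2
  norm_num at this
  simpa [thetaEisenstein] using this

open ModularForm MatrixGroups

open UpperHalfPlane in
lemma thetaEisenstein_slash_T :
    (fun τ : ℍ => thetaEisenstein τ) ∣[(4 : ℤ)] ModularGroup.T =
      fun τ : ℍ => thetaEisenstein τ := by
  ext τ
  rw [SL_slash_apply, ModularGroup.denom_apply, modular_T_smul]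
  simp [ModularGroup.T, add_comm (1 : ℂ), thetaEisenstein_add_one]

open UpperHalfPlane in
lemma thetaEisenstein_slash_S :
    (fun τ : ℍ => thetaEisenstein τ) ∣[(4 : ℤ)] ModularGroup.S =
      fun τ : ℍ => thetaEisenstein τ := by
  ext τ
  have h := thetaEisenstein_neg_inv (ne_zero τ)
  rw [neg_div, one_div] at h
  suffices thetaEisenstein (-(τ : ℂ)⁻¹) * ((τ : ℂ) ^ 4)⁻¹ = thetaEisenstein τ by
    rw [SL_slash_apply, UpperHalfPlane.modular_S_smul]
    simpa [ModularGroup.denom_S] using! this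
  rw [h]
  field_simp [ne_zero τ]

open UpperHalfPlane in
/-- The combination `thetaEisenstein` as a modular form of level one and weight four. -/
noncomputable def thetaEisensteinForm : ModularForm 𝒮ℒ 4 where
  toFun τ := thetaEisenstein τ
  slash_action_eq' A hA := by
    obtain ⟨A, rfl⟩ := hA
    exact SlashInvariantForm.slash_action_generators_SL2Z thetaEisenstein_slash_S
      thetaEisenstein_slash_T A
  holo' := by
    rw [UpperHalfPlane.mdifferentiable_iff]
    refine .congr (fun z hz ↦
      (differentiableAt_thetaEisenstein hz).differentiableWithinAt) fun z hz ↦ ?_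
    simp [ofComplex_apply_of_im_pos hz]
  bdd_at_cusps' hc := by
    rw [Subgroup.IsArithmetic.isCusp_iff_isCusp_SL2Z] at hc
    rw [OnePoint.isBoundedAt_iff_forall_SL2Z hc]
    intro γ _
    rw [SlashInvariantForm.slash_action_generators_SL2Z thetaEisenstein_slash_S
      thetaEisenstein_slash_T]
    exact tendsto_thetaEisenstein.isBigO_one ℝ

open UpperHalfPlane in
lemma E_four_eq_thetaEisenstein (τ : ℍ) : E₄ τ = thetaEisenstein τ := by
  obtain ⟨c, hc⟩ : ∃ c : ℂ, c • E₄ = thetaEisensteinForm :=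
    (finrank_eq_one_iff_of_nonzero' E₄ (EisensteinSeries.E_ne_zero _ ⟨2, rfl⟩)).mp
      (Module.rank_eq_one_iff_finrank_eq_one.mp levelOne_weight_four_rank_one) _
  have h1 : (qExpansion 1 thetaEisensteinForm).coeff 0 = 1 := by
    rw [qExpansion_coeff_zero one_pos
      (ModularFormClass.analyticAt_cuspFunction_zero _ one_pos one_mem_strictPeriods_SL)
      (SlashInvariantFormClass.periodic_comp_ofComplex _ one_mem_strictPeriods_SL)]
    exact tendsto_thetaEisenstein.limUnder_eq
  have h2 : c = 1 := by
    rw [← hc, FunLike.coe_smul, ModularForm.qExpansion_smul one_pos one_mem_strictPeriods_SL,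
      PowerSeries.coeff_smul, EisensteinSeries.E_qExpansion_coeff_zero _ ⟨2, rfl⟩] at h1
    simpa using h1
  have h3 := DFunLike.congr_fun hc τ
  rw [h2, one_smul] at h3
  exact h3

open UpperHalfPlane in
lemma tsum_eisSummand_four (τ : ℍ) :
    ∑' v, EisensteinSeries.eisSummand 4 v τ = π ^ 4 / 45 * thetaEisenstein τ := by
  have h := tsum_eisSummand_eq_riemannZeta_mul_eisensteinSeries (k := 4) (by norm_num) τ
  have h2 : E₄ τ = 1 / 2 * eisensteinSeries (N := 1) 0 4 τ := rfl
  rw [E_four_eq_thetaEisenstein] at h2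
  push_cast at h
  rw [h, h2, riemannZeta_four]
  ring

lemma jacobiTheta₂_zero_I_mul (s : ℝ) :
    jacobiTheta₂ 0 (Complex.I * s) = (thetaThree 0 s : ℂ) := by
  rw [thetaThree_zero_eq, Complex.ofReal_tsum, jacobiTheta₂]
  refine tsum_congr fun n => ?_
  rw [jacobiTheta₂_term, Complex.ofReal_exp]
  congr 1
  push_cast
  linear_combination (π * n ^ 2 * s : ℂ) * Complex.I_sq

lemma jacobiTheta₂_half_I_mul (s : ℝ) :
    jacobiTheta₂ (1 / 2) (Complex.I * s) = (thetaFour 0 s : ℂ) := by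
  rw [thetaFour_zero_eq, Complex.ofReal_tsum, jacobiTheta₂]
  refine tsum_congr fun n => ?_
  rw [jacobiTheta₂_term, Complex.exp_add, Complex.ofReal_mul, Complex.ofReal_exp]
  congr 1
  · rw [show (2 * π * Complex.I * n * (1 / 2) : ℂ) = n * (π * Complex.I) by ring,
      Complex.exp_int_mul, Complex.exp_pi_mul_I]
    push_cast
    rfl
  · congr 1
    push_cast
    linear_combination (π * n ^ 2 * s : ℂ) * Complex.I_sq

lemma thetaTwoPowEight_I_mul {s : ℝ} (hs : 0 < s) :
    thetaTwoPowEight (Complex.I * s) = ((s ^ 4)⁻¹ * thetaFour 0 s⁻¹ ^ 8 : ℝ) := by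
  have hs' : (s : ℂ) ≠ 0 := by exact_mod_cast hs.ne'
  rw [thetaTwoPowEight_eq (mul_ne_zero Complex.I_ne_zero hs'),
    show -1 / (Complex.I * s) = Complex.I * (s⁻¹ : ℝ) by
      push_cast
      field_simp
      rw [Complex.I_sq],
    jacobiTheta₂_half_I_mul, mul_pow, Complex.I_pow_four]
  push_cast
  ring

lemma thetaThree_inv_sqrt_two_sq :
    thetaThree 0 (√2)⁻¹ ^ 2 = √2 * thetaThree 0 (√2) ^ 2 := by
  rw [thetaThree_zero_inv (by positivity), mul_pow, Real.sq_sqrt (by positivity)]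

lemma thetaFour_inv_sqrt_two_sq :
    thetaFour 0 (√2)⁻¹ ^ 2 = (2 - √2) * thetaThree 0 (√2) ^ 2 := by
  have h := thetaThree_sq_add_thetaFour_sq (s := (√2)⁻¹) (by positivity)
  rw [← div_eq_mul_inv, Real.div_sqrt, thetaThree_inv_sqrt_two_sq] at h
  linear_combination h

lemma thetaFour_sqrt_two_pow_four :
    thetaFour 0 (√2) ^ 4 = (2 * √2 - 2) * thetaThree 0 (√2) ^ 4 := by
  have h := thetaThree_mul_thetaFour (s := (√2)⁻¹) (by positivity)
  rw [show 2 * (√2)⁻¹ = √2 by rw [← div_eq_mul_inv, Real.div_sqrt]] at h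
  have h2 : (√2) ^ 2 = 2 := Real.sq_sqrt (by norm_num)
  calc thetaFour 0 (√2) ^ 4 = thetaThree 0 (√2)⁻¹ ^ 2 * thetaFour 0 (√2)⁻¹ ^ 2 := by
        rw [← mul_pow, h]; ring
    _ = _ := by
        rw [thetaThree_inv_sqrt_two_sq, thetaFour_inv_sqrt_two_sq]
        linear_combination (-thetaThree 0 (√2) ^ 4) * h2

lemma thetaEisenstein_I_mul_sqrt_two :
    thetaEisenstein (Complex.I * (√2 : ℝ)) =
      ((15 - 10 * √2) * thetaThree 0 (√2) ^ 8 : ℝ) := by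
  have h2 : (√2) ^ 2 = 2 := Real.sq_sqrt (by norm_num)
  rw [thetaEisenstein, thetaTwoPowEight_I_mul (by positivity), jacobiTheta₂_zero_I_mul,
    jacobiTheta₂_half_I_mul]
  norm_cast
  rw [show thetaFour 0 (√2)⁻¹ ^ 8 = (thetaFour 0 (√2)⁻¹ ^ 2) ^ 4 by ring,
    show thetaFour 0 (√2) ^ 8 = (thetaFour 0 (√2) ^ 4) ^ 2 by ring,
    thetaFour_inv_sqrt_two_sq, thetaFour_sqrt_two_pow_four,
    show (√2) ^ 4 = 4 by rw [show (√2) ^ 4 = ((√2) ^ 2) ^ 2 by ring, h2]; norm_num]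
  linear_combination (√2 ^ 2 / 8 - √2 + 21 / 4) * thetaThree 0 (√2) ^ 8 * h2

lemma integral_rpow_mul_one_sub_rpow {p q : ℝ} (hp : 0 < p) (hq : 0 < q) :
    ∫ t in Set.Ioo (0 : ℝ) 1, t ^ (p - 1) * (1 - t) ^ (q - 1) =
      Real.Gamma p * Real.Gamma q / Real.Gamma (p + q) := by
  rw [← ProbabilityTheory.beta, ProbabilityTheory.beta_eq_betaIntegralReal p q hp hq,
    Complex.betaIntegral, intervalIntegral.integral_of_le zero_le_one,
    ← integral_Ioc_eq_integral_Ioo, ← Complex.ofReal_re (∫ t in _, _), ← integral_complex_ofReal]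
  congr 1
  refine setIntegral_congr_fun measurableSet_Ioc fun t ht => ?_
  have h1 : 0 ≤ 1 - t := sub_nonneg.mpr ht.2
  simp only [Complex.ofReal_mul, Complex.ofReal_cpow ht.1.le, Complex.ofReal_cpow h1]
  push_cast
  rfl

lemma image_pow_div_one_add_pow (n : ℕ) (hn : n ≠ 0) :
    (fun u : ℝ => u ^ n / (1 + u ^ n)) '' Set.Ioi 0 = Set.Ioo 0 1 := by
  ext t
  constructor
  · rintro ⟨u, hu, rfl⟩
    have : 0 < u ^ n := pow_pos hu n
    exact ⟨by positivity, by rw [div_lt_one (by positivity)]; linarith⟩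
  · rintro ⟨h0, h1⟩
    have h : 0 < t / (1 - t) := div_pos h0 (sub_pos.mpr h1)
    refine ⟨(t / (1 - t)) ^ (n : ℝ)⁻¹, Real.rpow_pos_of_pos h _, ?_⟩
    simp only [Real.rpow_inv_natCast_pow h.le hn]
    have : 1 - t ≠ 0 := (sub_pos.mpr h1).ne'
    field_simp
    ring

lemma integral_rpow_mul_one_add_pow_rpow {n : ℕ} (hn : n ≠ 0) {p q : ℝ} (hp : 0 < p)
    (hq : 0 < q) :
    ∫ u in Set.Ioi (0 : ℝ), u ^ (n * p - 1) * (1 + u ^ n) ^ (-(p + q)) =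
      Real.Gamma p * Real.Gamma q / (n * Real.Gamma (p + q)) := by
  have hn' : (0 : ℝ) < n := by positivity
  have hd : ∀ u ∈ Set.Ioi (0 : ℝ), HasDerivWithinAt (fun u : ℝ => u ^ n / (1 + u ^ n))
      (n * u ^ (n - 1) / (1 + u ^ n) ^ 2) (Set.Ioi 0) u := by
    intro u hu
    have hu' : 0 < u := hu
    have h := (hasDerivAt_pow n u).fun_div ((hasDerivAt_pow n u).const_add 1)
      (by positivity : (1 + u ^ n : ℝ) ≠ 0)
    exact (h.congr_deriv (by ring)).hasDerivWithinAt
  have hinj : Set.InjOn (fun u : ℝ => u ^ n / (1 + u ^ n)) (Set.Ioi 0) := by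
    intro a ha b hb hab
    have ha' : 0 < a := ha
    have hb' : 0 < b := hb
    simp only at hab
    rw [div_eq_div_iff (by positivity) (by positivity)] at hab
    exact (pow_left_inj₀ ha'.le hb'.le hn).mp (by linarith)
  have h := integral_image_eq_integral_abs_deriv_smul measurableSet_Ioi hd hinj
    (fun t => t ^ (p - 1) * (1 - t) ^ (q - 1))
  rw [image_pow_div_one_add_pow n hn, integral_rpow_mul_one_sub_rpow hp hq] at h
  rw [div_mul_eq_div_div_swap, h, div_eq_inv_mul, ← integral_const_mul]
  refine setIntegral_congr_fun measurableSet_Ioi fun u hu => ?_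
  have hu' : 0 < u := hu
  have hw : 0 < 1 + u ^ n := by positivity
  have h1 : 1 - u ^ n / (1 + u ^ n) = (1 + u ^ n)⁻¹ := by field_simp; ring
  have h2 : |n * u ^ (n - 1) / (1 + u ^ n) ^ 2| =
      n * (u ^ ((n : ℝ) - 1) * (1 + u ^ n) ^ (-2 : ℝ)) := by
    rw [abs_of_nonneg (by positivity), Real.rpow_neg hw.le, Real.rpow_sub_one hu'.ne',
      Real.rpow_natCast, Real.rpow_two, ← pow_sub_one_mul hn u]
    field_simp
  have h3 : (u ^ n) ^ (p - 1) = u ^ (n * (p - 1)) := by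
    rw [← Real.rpow_natCast u n, ← Real.rpow_mul hu'.le]
  simp only [smul_eq_mul]
  rw [h1, h2, div_eq_mul_inv, Real.mul_rpow (by positivity) (by positivity), h3]
  generalize 1 + u ^ n = w at hw
  rw [Real.inv_rpow hw.le, Real.inv_rpow hw.le, ← Real.rpow_neg hw.le, ← Real.rpow_neg hw.le,
    show (n : ℝ) * p - 1 = (n - 1) + n * (p - 1) by ring,
    show -(p + q) = -2 + (-(p - 1) + -(q - 1)) by ring, Real.rpow_add hu', Real.rpow_add hw,
    Real.rpow_add hw]
  field_simp

lemma integral_one_add_sq_div_sqrt_one_add_pow_eight :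
    ∫ u in Set.Ioi (0 : ℝ), (1 + u ^ 2) / √(1 + u ^ 8) =
      Real.Gamma (1 / 8) * Real.Gamma (3 / 8) / (4 * √π) := by
  have hne : ∀ {p q : ℝ}, 0 < p → 0 < q → p + q = 1 / 2 →
      Real.Gamma p * Real.Gamma q / ((8 : ℕ) * Real.Gamma (p + q)) =
      Real.Gamma p * Real.Gamma q / (8 * √π) := by
    intro p q _ _ h
    rw [h, Real.Gamma_one_half_eq]
    norm_num
  have hint : ∀ {p q : ℝ}, 0 < p → 0 < q → IntegrableOn
      (fun u : ℝ => u ^ ((8 : ℕ) * p - 1) * (1 + u ^ 8) ^ (-(p + q))) (Set.Ioi 0) := by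
    intro p q hp hq
    refine not_imp_comm.1 integral_undef ?_
    rw [integral_rpow_mul_one_add_pow_rpow (by norm_num) hp hq]
    have h1 := Real.Gamma_pos_of_pos hp
    have h2 := Real.Gamma_pos_of_pos hq
    have h3 := Real.Gamma_pos_of_pos (add_pos hp hq)
    positivity
  have hp : (0 : ℝ) < 1 / 8 := by norm_num
  have hq : (0 : ℝ) < 3 / 8 := by norm_num
  have h := integral_add (hint hp hq) (hint hq hp)
  rw [integral_rpow_mul_one_add_pow_rpow (by norm_num) hp hq,
    integral_rpow_mul_one_add_pow_rpow (by norm_num) hq hp, hne hp hq (by norm_num),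
    hne hq hp (by norm_num)] at h
  rw [show Real.Gamma (1 / 8) * Real.Gamma (3 / 8) / (4 * √π) =
    Real.Gamma (1 / 8) * Real.Gamma (3 / 8) / (8 * √π) +
    Real.Gamma (3 / 8) * Real.Gamma (1 / 8) / (8 * √π) by field_simp; ring, ← h]
  refine setIntegral_congr_fun measurableSet_Ioi fun u hu => ?_
  have hw : (0 : ℝ) ≤ 1 + u ^ 8 := by positivity
  norm_num
  rw [Real.rpow_neg hw, ← Real.sqrt_eq_rpow]
  field_simp

lemma agmIntegral_sqrt_two_add_sub :
    agmIntegral (√(2 + √2)) (√(2 - √2)) =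
      Real.Gamma (1 / 8) * Real.Gamma (3 / 8) / (8 * √π) := by
  have h2 : (√2) ^ 2 = 2 := Real.sq_sqrt (by norm_num)
  have hlt : √2 ≤ 2 := by nlinarith [Real.sqrt_nonneg 2]
  have h := two_mul_agmIntegral (√(2 + √2)) (√(2 - √2))
  rw [integral_eq_integral_Ioi_sub_div _ one_pos, Real.sq_sqrt (by positivity),
    Real.sq_sqrt (by linarith)] at h
  have hI : ∫ u in Set.Ioi (0 : ℝ), (1 + 1 / u ^ 2) * (1 /
      √(((u - 1 / u) ^ 2 + (2 + √2)) * ((u - 1 / u) ^ 2 + (2 - √2)))) =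
      ∫ u in Set.Ioi (0 : ℝ), (1 + u ^ 2) / √(1 + u ^ 8) := by
    refine setIntegral_congr_fun measurableSet_Ioi fun u hu => ?_
    have hu' : 0 < u := hu
    have h3 : ((u - 1 / u) ^ 2 + (2 + √2)) * ((u - 1 / u) ^ 2 + (2 - √2)) =
        (1 + u ^ 8) / (u ^ 2) ^ 2 := by
      field_simp
      linear_combination (-u ^ 4) * h2
    rw [h3, Real.sqrt_div (by positivity), Real.sqrt_sq (by positivity)]
    field_simp
    ring
  rw [hI, integral_one_add_sq_div_sqrt_one_add_pow_eight] at h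
  rw [show (8 : ℝ) * √π = 2 * (4 * √π) by ring]
  field_simp at h ⊢
  linarith

lemma thetaThree_sqrt_two_pow_eight :
    thetaThree 0 (√2) ^ 8 =
      (2 + √2) ^ 2 * (Real.Gamma (1 / 8) * Real.Gamma (3 / 8)) ^ 4 / (1024 * π ^ 6) := by
  have h2 : (√2) ^ 2 = 2 := Real.sq_sqrt (by norm_num)
  have hlt : 0 < 2 - √2 := by nlinarith [Real.sqrt_nonneg 2]
  have hA := thetaThree_pos (s := √2) (by positivity)
  have h := agmIntegral_theta (s := (√2)⁻¹) (by positivity)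
  rw [thetaThree_inv_sqrt_two_sq, thetaFour_inv_sqrt_two_sq] at h
  set x := thetaThree 0 (√2) ^ 2 with hx
  have hx0 : 0 < x := by positivity
  set a := √(2 + √2) with ha
  have ha0 : 0 < a := by positivity
  have ha2 : a ^ 2 = 2 + √2 := Real.sq_sqrt (by positivity)
  have hb : √(2 - √2) = (√2 - 1) * a := by
    rw [Real.sqrt_eq_iff_mul_self_eq hlt.le (by
      have : 1 ≤ √2 := Real.one_le_sqrt.mpr (by norm_num)
      exact mul_nonneg (by linarith) ha0.le)]
    linear_combination (-(√2 - 1) ^ 2) * ha2 - √2 * h2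
  have hJ := agmIntegral_sqrt_two_add_sub
  have hs := agmIntegral_const_mul (t := √2 * x / a) (by positivity) a (√(2 - √2))
  rw [hJ, show √2 * x / a * a = √2 * x by field_simp,
    show √2 * x / a * √(2 - √2) = (2 - √2) * x by
      rw [hb]; field_simp; linear_combination h2, h] at hs
  have hxe : x = 2 * a * (Real.Gamma (1 / 8) * Real.Gamma (3 / 8)) / (8 * √2 * π * √π) := by
    field_simp at hs ⊢
    linarith
  have hp2 : (√π) ^ 2 = π := Real.sq_sqrt Real.pi_pos.le
  rw [show thetaThree 0 (√2) ^ 8 = x ^ 4 by rw [hx]; ring, hxe, div_pow, mul_pow, mul_pow, mul_pow,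
    mul_pow, mul_pow, mul_pow, show a ^ 4 = (a ^ 2) ^ 2 by ring, ha2,
    show (√2) ^ 4 = ((√2) ^ 2) ^ 2 by ring, h2, show (√π) ^ 4 = ((√π) ^ 2) ^ 2 by ring, hp2]
  field_simp
  ring

end Auxiliary

theorem stmt_19 :
    ∫ k in (0:ℝ)..(1:ℝ), (2 + 3 * k - k^2) / Real.sqrt (1 + k) * (EllK k)^3
      = Real.Gamma (1/8) ^ 4 * Real.Gamma (3/8) ^ 4 / (384 * Real.sqrt 2 * π^2) := by
  have h2 : (√2) ^ 2 = 2 := Real.sq_sqrt (by norm_num)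
  have h := integral_pow_three_mul_latticeTheta
  rw [tsum_eisSummand_four, show ((iSqrtTwo : UpperHalfPlane) : ℂ) = Complex.I * (√2 : ℝ) from rfl,
    thetaEisenstein_I_mul_sqrt_two,
    show (π ^ 4 / 45 : ℂ) = ((π ^ 4 / 45 : ℝ) : ℂ) by push_cast; rfl,
    ← Complex.ofReal_mul, Complex.ofReal_re, thetaThree_sqrt_two_pow_eight] at h
  rw [integral_EllK_eq_integral_latticeTheta, integral_latticeTheta, h]
  have h3 : (15 - 10 * √2) * (2 + √2) ^ 2 = 10 := by
    linear_combination (-10 * √2 - 25) * h2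
  field_simp
  linear_combination 2304 * √2 ^ 2 * h3 + 23040 * h2
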